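/- arXiv:2601.10185 — 6 statements merged into one kernel-verified Lean document; each statement's English description precedes it below -/
import Mathlib

section
/- Let a ∈ ℝ², c ∈ ℝ, and define J₁(t,x) = c Σ_{k=1}^∞ (t/2)^k a·∇(−Δ)^kG(t,x)/(k·k!) for t > 0, x ∈ ℝ². Then J₁ satisfies the self-similar scaling law λ³ J₁(λ²t, λx) = J₁(t,x) for all λ > 0, t > 0, x ∈ ℝ²; consequently, for every 1 ≤ q ≤ ∞ and t > 0, ‖J₁(t)‖_{L^q(ℝ²)} = t^{−γ_q−1/2} ‖J₁(1)‖_{L^q(ℝ²)}. -/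
/-!
The heat kernel satisfies `λ² G(λ²t, λx) = G(t,x)`. Each spatial derivative raises the exponent of
`λ` in such an identity by one and each factor `t` lowers it by two, so every term
`t^k a·∇(−Δ)^k G` of the series scales with exponent `2 + 2k + 1 − 2k = 3`, and so does `J₁`.
Taking `λ = t^{-1/2}` writes `J₁(t)` as `t^{-3/2}` times a dilate of `J₁(1)`; in dimension two the
dilation multiplies the `L^q` norm by `t^{1/q}`, and `1/q - 3/2 = -γ_q - 1/2`.
-/

open MeasureTheory Real Filter Asymptotics ENNReal

noncomputable section

/-- The plane `ℝ²`, realized as a Euclidean space. -/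
abbrev E2 : Type := EuclideanSpace ℝ (Fin 2)

/-- The two-dimensional heat kernel `G(t,x) = (4πt)⁻¹ exp(-|x|²/(4t))`. -/
def G (t : ℝ) (x : E2) : ℝ := (4 * π * t)⁻¹ * Real.exp (-‖x‖ ^ 2 / (4 * t))

/-- Partial derivative `∂_j` in the `j`-th coordinate direction. -/
def pd (j : Fin 2) (f : E2 → ℝ) (x : E2) : ℝ := fderiv ℝ f x (EuclideanSpace.single j 1)

/-- The decay exponent `γ_q = 1 - 1/q` (with the convention `γ_∞ = 1`). -/
def gam (q : ℝ≥0∞) : ℝ := 1 - (q.toReal)⁻¹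

/-- The negative Laplacian `-Δ`. -/
def negLap (f : E2 → ℝ) (x : E2) : ℝ := -(pd 0 (pd 0 f) x + pd 1 (pd 1 f) x)

/-- Self-similarity of degree `-n` under parabolic scaling: `lⁿ u(l²t, lx) = u(t,x)`. Only times
`t > 0` matter; negative `l` are allowed, so the parity of `u t` is that of `n`. -/
def IsSelfSimilar {E F : Type*} [SMul ℝ E] [SMul ℝ F] (n : ℕ) (u : ℝ → E → F) : Prop :=
  ∀ ⦃l : ℝ⦄, l ≠ 0 → ∀ ⦃t : ℝ⦄, 0 < t → ∀ x : E, l ^ n • u (l ^ 2 * t) (l • x) = u t x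

namespace IsSelfSimilar

variable {E F ι : Type*} [SMul ℝ E] {n : ℕ}

protected lemma congr [SMul ℝ F] {u v : ℝ → E → F} (hu : IsSelfSimilar n u)
    (huv : ∀ t : ℝ, 0 < t → ∀ x, v t x = u t x) : IsSelfSimilar n v := by
  intro l hl t ht x
  rw [huv t ht, huv (l ^ 2 * t) (by positivity), hu hl ht]

protected lemma const_smul {R : Type*} [SMul ℝ F] [SMul R F] [SMulCommClass ℝ R F]
    {u : ℝ → E → F} (hu : IsSelfSimilar n u) (c : R) :
    IsSelfSimilar n fun t x => c • u t x := by
  intro l hl t ht x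
  rw [smul_comm, hu hl ht]

lemma time_pow_smul [MulAction ℝ F] {u : ℝ → E → F} {k : ℕ}
    (hu : IsSelfSimilar (n + 2 * k) u) : IsSelfSimilar n fun t x => t ^ k • u t x := by
  intro l hl t ht x
  calc l ^ n • (l ^ 2 * t) ^ k • u (l ^ 2 * t) (l • x)
      = t ^ k • l ^ (n + 2 * k) • u (l ^ 2 * t) (l • x) := by
        rw [smul_smul, smul_smul]
        ring_nf
    _ = t ^ k • u t x := by rw [hu hl ht]

protected lemma neg [AddGroup F] [DistribMulAction ℝ F] {u : ℝ → E → F} (hu : IsSelfSimilar n u) :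
    IsSelfSimilar n fun t x => -u t x := by
  intro l hl t ht x
  rw [smul_neg, hu hl ht]

protected lemma sum [AddCommMonoid F] [DistribSMul ℝ F] {u : ι → ℝ → E → F} {s : Finset ι}
    (hu : ∀ i ∈ s, IsSelfSimilar n (u i)) : IsSelfSimilar n fun t x => ∑ i ∈ s, u i t x := by
  intro l hl t ht x
  rw [Finset.smul_sum]
  exact Finset.sum_congr rfl fun i hi => hu i hi hl ht x

protected lemma tsum [AddCommMonoid F] [Module ℝ F] [TopologicalSpace F] [T2Space F]
    [ContinuousConstSMul ℝ F] {u : ι → ℝ → E → F} (hu : ∀ i, IsSelfSimilar n (u i)) :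
    IsSelfSimilar n fun t x => ∑' i, u i t x := by
  intro l hl t ht x
  rw [← tsum_const_smul'']
  exact tsum_congr fun i => hu i hl ht x

end IsSelfSimilar

lemma pd_const_mul_comp_smul (j : Fin 2) (A l : ℝ) (f : E2 → ℝ) (x : E2) :
    pd j (fun y => A * f (l • y)) x = A * l * pd j f (l • x) := by
  change fderiv ℝ (A • fun y => f (l • y)) x _ = A * l * fderiv ℝ f (l • x) _
  rw [fderiv_const_smul_field, Pi.smul_apply, fderiv_comp_smul]
  simp only [smul_apply, smul_eq_mul, mul_assoc]

namespace IsSelfSimilar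

variable {n : ℕ} {u : ℝ → E2 → ℝ}

protected lemma pd (hu : IsSelfSimilar n u) (j : Fin 2) :
    IsSelfSimilar (n + 1) fun t => pd j (u t) := by
  intro l hl t ht x
  have hut : u t = fun y => l ^ n * u (l ^ 2 * t) (l • y) := funext fun y => (hu hl ht y).symm
  calc l ^ (n + 1) * pd j (u (l ^ 2 * t)) (l • x)
      = pd j (fun y => l ^ n * u (l ^ 2 * t) (l • y)) x := by
        rw [pd_const_mul_comp_smul, pow_succ]
    _ = pd j (u t) x := by rw [← hut]

protected lemma negLap (hu : IsSelfSimilar n u) :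
    IsSelfSimilar (n + 2) fun t => negLap (u t) := by
  have hsum := IsSelfSimilar.sum (s := Finset.univ) fun j _ => (hu.pd j).pd j
  exact hsum.neg.congr fun t _ x => by rw [_root_.negLap, Fin.sum_univ_two]

lemma iterate_negLap (hu : IsSelfSimilar n u) (k : ℕ) :
    IsSelfSimilar (n + 2 * k) fun t => negLap^[k] (u t) := by
  induction k with
  | zero => exact hu
  | succ k ih =>
    simp only [Function.iterate_succ_apply']
    exact ih.negLap

end IsSelfSimilar

lemma isSelfSimilar_G : IsSelfSimilar 2 G := by
  intro l hl t ht x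
  have hexp : -‖l • x‖ ^ 2 / (4 * (l ^ 2 * t)) = -‖x‖ ^ 2 / (4 * t) := by
    rw [norm_smul, Real.norm_eq_abs, mul_pow, sq_abs]
    field_simp
  rw [G, G, hexp, smul_eq_mul]
  field_simp

lemma isSelfSimilar_pow_mul_grad_iterate_negLap_G (a : E2) (k : ℕ) :
    IsSelfSimilar 3 fun t x => t ^ k * ∑ j : Fin 2, a j * pd j (negLap^[k] (G t)) x := by
  have hpd (j : Fin 2) : IsSelfSimilar (3 + 2 * k) fun t => pd j (negLap^[k] (G t)) := by
    convert (isSelfSimilar_G.iterate_negLap k).pd j using 1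
    ring
  exact (IsSelfSimilar.sum fun j _ => (hpd j).const_smul (a j)).time_pow_smul

/-- The nonlinear distortion `J₁(t,x) = c Σ_{k≥1} (t/2)^k a·∇(−Δ)^k G(t,x)/(k·k!)`, summed over
`k + 1` with `k : ℕ`. -/
def distortion (a : E2) (c t : ℝ) (x : E2) : ℝ :=
  c * ∑' k : ℕ, (t / 2) ^ (k + 1) * (∑ j : Fin 2, a j * pd j (negLap^[k + 1] (G t)) x) /
    (((k + 1) * Nat.factorial (k + 1) : ℕ) : ℝ)

lemma isSelfSimilar_distortion (a : E2) (c : ℝ) : IsSelfSimilar 3 (distortion a c) := by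
  refine (IsSelfSimilar.tsum fun k => ?_).const_smul c
  refine ((isSelfSimilar_pow_mul_grad_iterate_negLap_G a (k + 1)).const_smul
    ((2 ^ (k + 1))⁻¹ * (((k + 1) * Nat.factorial (k + 1) : ℕ) : ℝ)⁻¹)).congr fun t _ x => ?_
  rw [div_pow, smul_eq_mul]
  ring

section Norm

variable {E F : Type*} [NormedAddCommGroup E] [NormedSpace ℝ E] [FiniteDimensional ℝ E]
  [MeasurableSpace E] [BorelSpace E] (μ : Measure E) [μ.IsAddHaarMeasure] [NormedAddCommGroup F]

lemma eLpNorm_comp_const_smul (f : E → F) (q : ℝ≥0∞) {l : ℝ} (hl : l ≠ 0) :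
    eLpNorm (fun x => f (l • x)) q μ
      = ENNReal.ofReal (|l| ^ (-Module.finrank ℝ E * (q⁻¹).toReal)) * eLpNorm f q μ := by
  have habs : 0 < |l| := abs_pos.2 hl
  have hmap : μ.map (fun x => l • x) = ENNReal.ofReal (|l| ^ (-Module.finrank ℝ E : ℝ)) • μ := by
    rw [Real.rpow_neg habs.le, Real.rpow_natCast, ← abs_pow, ← abs_inv]
    exact Measure.map_addHaar_smul μ hl
  have hfactor : ENNReal.ofReal (|l| ^ (-Module.finrank ℝ E : ℝ)) ≠ 0 :=
    (ENNReal.ofReal_pos.2 (Real.rpow_pos_of_pos habs _)).ne'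
  calc eLpNorm (fun x => f (l • x)) q μ
      = eLpNorm f q (μ.map fun x => l • x) :=
        ((measurableEmbedding_const_smul₀ hl).eLpNorm_map_measure).symm
    _ = ENNReal.ofReal (|l| ^ (-Module.finrank ℝ E : ℝ)) ^ (q⁻¹).toReal * eLpNorm f q μ := by
        rw [hmap, eLpNorm_smul_measure_of_ne_zero hfactor, one_div, smul_eq_mul]
    _ = ENNReal.ofReal (|l| ^ (-Module.finrank ℝ E * (q⁻¹).toReal)) * eLpNorm f q μ := by
        rw [ENNReal.ofReal_rpow_of_pos (by positivity), ← Real.rpow_mul habs.le]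

lemma IsSelfSimilar.eLpNorm_eq [NormedSpace ℝ F] {n : ℕ} {u : ℝ → E → F}
    (hu : IsSelfSimilar n u) (q : ℝ≥0∞) {t : ℝ} (ht : 0 < t) :
    eLpNorm (u t) q μ
      = ENNReal.ofReal (t ^ ((Module.finrank ℝ E * (q⁻¹).toReal - n) / 2))
        * eLpNorm (u 1) q μ := by
  set l : ℝ := t ^ (-1 / 2 : ℝ) with hl
  have hl_pos : 0 < l := Real.rpow_pos_of_pos ht _
  have hl_sq : l ^ 2 * t = 1 := by
    rw [hl, ← Real.rpow_mul_natCast ht.le, ← Real.rpow_add_one ht.ne']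
    norm_num
  have hut : u t = l ^ n • fun x => u 1 (l • x) := by
    funext x
    rw [← hu hl_pos.ne' ht x, hl_sq, Pi.smul_apply]
  have hfactor : l ^ n * l ^ (-Module.finrank ℝ E * (q⁻¹).toReal)
      = t ^ ((Module.finrank ℝ E * (q⁻¹).toReal - n) / 2) := by
    rw [← Real.rpow_natCast, ← Real.rpow_add hl_pos, hl, ← Real.rpow_mul ht.le]
    ring_nf
  rw [hut, eLpNorm_const_smul, eLpNorm_comp_const_smul μ _ q hl_pos.ne', abs_of_pos hl_pos,
    Real.enorm_eq_ofReal (by positivity), ← mul_assoc, ← ENNReal.ofReal_mul (by positivity),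
    hfactor]

end Norm

theorem distortion_scaling_law_general
    (a : E2) (c : ℝ) (J₁ : ℝ → E2 → ℝ)
    (hJ₁ : ∀ t : ℝ, 0 < t → ∀ x : E2, J₁ t x = distortion a c t x) :
    (∀ l : ℝ, l ≠ 0 → ∀ t : ℝ, 0 < t → ∀ x : E2,
        l ^ 3 * J₁ (l ^ 2 * t) (l • x) = J₁ t x) ∧
    (∀ q : ℝ≥0∞, q ≠ 0 → ∀ t : ℝ, 0 < t →
        eLpNorm (J₁ t) q volume
          = ENNReal.ofReal (t ^ (-gam q - 1/2)) * eLpNorm (J₁ 1) q volume) := by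
  have hself : IsSelfSimilar 3 J₁ := (isSelfSimilar_distortion a c).congr hJ₁
  refine ⟨fun l hl t ht x => hself hl ht x, fun q _ t ht => ?_⟩
  have hexp : (Module.finrank ℝ E2 * (q⁻¹).toReal - (3 : ℕ)) / 2 = -gam q - 1 / 2 := by
    rw [gam, finrank_euclideanSpace_fin, ENNReal.toReal_inv]
    push_cast
    ring
  rw [hself.eLpNorm_eq volume q ht, hexp]

/-- **Proposition (self-similar scaling of the nonlinear distortion `J₁`).**
`J₁(t,x) = c Σ_{k≥1} (t/2)^k a·∇(−Δ)^k G(t,x)/(k·k!)` satisfies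
`λ³ J₁(λ²t, λx) = J₁(t,x)`, hence `‖J₁(t)‖_{L^q} = t^{−γ_q−1/2} ‖J₁(1)‖_{L^q}`. -/
theorem distortion_scaling_law
    (a : E2) (c : ℝ) (J₁ : ℝ → E2 → ℝ)
    (hJ₁ : ∀ t : ℝ, 0 < t → ∀ x : E2,
      J₁ t x = c * ∑' k : ℕ, (t / 2) ^ (k + 1) *
        (∑ j : Fin 2, a j * pd j (negLap^[k + 1] (G t)) x) /
          (((k + 1) * Nat.factorial (k + 1) : ℕ) : ℝ)) :
    (∀ l : ℝ, 0 < l → ∀ t : ℝ, 0 < t → ∀ x : E2,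
        l ^ 3 * J₁ (l ^ 2 * t) (l • x) = J₁ t x) ∧
    (∀ q : ℝ≥0∞, 1 ≤ q → ∀ t : ℝ, 0 < t →
        eLpNorm (J₁ t) q volume
          = ENNReal.ofReal (t ^ (-gam q - 1/2)) * eLpNorm (J₁ 1) q volume) := by
  have hgen := distortion_scaling_law_general a c J₁ hJ₁
  exact ⟨fun l hl => hgen.1 l hl.ne', fun q hq => hgen.2 q (one_pos.trans_le hq).ne'⟩
end
end

section
/- For every r > 0, e^{−r} = (1/(2√π)) ∫₀^∞ λ^{−3/2} e^{−1/(4λ)} e^{−λr²} dλ (the integral being absolutely convergent). -/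
/-!
Substituting `x = λ ^ (-1/2)` and completing the square turns the integral into
`2 e^{-r} ∫₀^∞ exp(-(x/2 - r/x)²) dx`. For `b, c > 0` the map `x ↦ c x - b/x` is a bijection from
`(0, ∞)` onto `ℝ` whose inverse has derivative `(1 + u/√(u² + 4bc)) / (2c)`, which is the constant
`1/(2c)` plus an odd function of `u`. Hence `∫₀^∞ f(c x - b/x) dx = (2c)⁻¹ ∫ f` for every even
integrable `f` (the Cauchy–Schlömilch transformation), and the Gaussian `f` gives the formula.
-/

open MeasureTheory Real Filter Asymptotics ENNReal

noncomputable section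

theorem integral_eq_zero_of_odd {X E : Type*} [AddGroup X] [MeasurableSpace X] [MeasurableNeg X]
    {μ : Measure X} [μ.IsNegInvariant] [NormedAddCommGroup E] [NormedSpace ℝ E] {f : X → E}
    (hf : f.Odd) : ∫ x, f x ∂μ = 0 := by
  have : IsAddTorsionFree E := .of_isTorsionFree ℝ E
  rw [← self_eq_neg, ← integral_neg, ← integral_neg_eq_self f]
  simp only [hf.eq]

section CauchySchlomilch

/-- The positive solution `x` of `c * x - b / x = u`, for `b, c > 0`: the inverse of the
Cauchy–Schlömilch substitution `u = c * x - b / x` on `(0, ∞)`. -/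
def schlomilchInv (b c u : ℝ) : ℝ := (2 * c)⁻¹ * (u + √(u ^ 2 + 4 * b * c))

/-- The derivative in `u` of `schlomilchInv b c u`, that is, the Jacobian of the Cauchy–Schlömilch
substitution. -/
def schlomilchInvDeriv (b c u : ℝ) : ℝ := (2 * c)⁻¹ * (1 + u / √(u ^ 2 + 4 * b * c))

variable {E : Type*} [NormedAddCommGroup E] [NormedSpace ℝ E] {f : ℝ → E} {b c : ℝ}

theorem abs_lt_sqrt_sq_add {a : ℝ} (ha : 0 < a) (u : ℝ) : |u| < √(u ^ 2 + a) := by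
  rw [← sqrt_sq_eq_abs]
  exact sqrt_lt_sqrt (sq_nonneg u) (lt_add_of_pos_right _ ha)

theorem abs_div_sqrt_sq_add_le_one {a : ℝ} (ha : 0 ≤ a) (u : ℝ) : |u / √(u ^ 2 + a)| ≤ 1 := by
  rw [abs_div, abs_of_nonneg (sqrt_nonneg _)]
  exact div_le_one_of_le₀ (abs_le_sqrt (le_add_of_nonneg_right ha)) (sqrt_nonneg _)

theorem schlomilchInv_pos (hb : 0 < b) (hc : 0 < c) (u : ℝ) : 0 < schlomilchInv b c u := by
  have h := (abs_lt.mp (abs_lt_sqrt_sq_add (a := 4 * b * c) (by positivity) u)).1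
  exact mul_pos (by positivity) (by linarith)

theorem mul_schlomilchInv_sub_div (hb : 0 < b) (hc : 0 < c) (u : ℝ) :
    c * schlomilchInv b c u - b / schlomilchInv b c u = u := by
  have hx := (schlomilchInv_pos hb hc u).ne'
  have hsq : √(u ^ 2 + 4 * b * c) ^ 2 = u ^ 2 + 4 * b * c := sq_sqrt (by positivity)
  rw [sub_eq_iff_eq_add, ← sub_eq_iff_eq_add', eq_div_iff hx, schlomilchInv]
  generalize √(u ^ 2 + 4 * b * c) = s at hsq
  field_simp
  linear_combination hsq

theorem schlomilchInv_mul_sub_div (hb : 0 ≤ b) (hc : 0 < c) {x : ℝ} (hx : 0 < x) :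
    schlomilchInv b c (c * x - b / x) = x := by
  have hsq : (c * x - b / x) ^ 2 + 4 * b * c = (c * x + b / x) ^ 2 := by
    field_simp
    ring
  rw [schlomilchInv, hsq, sqrt_sq (by positivity)]
  field_simp
  ring

theorem range_schlomilchInv (hb : 0 < b) (hc : 0 < c) :
    Set.range (schlomilchInv b c) = Set.Ioi 0 :=
  Set.Subset.antisymm (Set.range_subset_iff.mpr (schlomilchInv_pos hb hc))
    fun _ hx ↦ ⟨_, schlomilchInv_mul_sub_div hb.le hc hx⟩

theorem schlomilchInv_injective (hb : 0 < b) (hc : 0 < c) :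
    Function.Injective (schlomilchInv b c) :=
  Function.LeftInverse.injective (g := fun x ↦ c * x - b / x) (mul_schlomilchInv_sub_div hb hc)

theorem hasDerivAt_schlomilchInv (hb : 0 < b) (hc : 0 < c) (u : ℝ) :
    HasDerivAt (schlomilchInv b c) (schlomilchInvDeriv b c u) u := by
  have hpos : 0 < u ^ 2 + 4 * b * c := by positivity
  have hsqrt := ((hasDerivAt_pow 2 u).add_const (4 * b * c)).sqrt hpos.ne'
  refine (((hasDerivAt_id u).add hsqrt).const_mul (2 * c)⁻¹).congr_deriv ?_
  rw [schlomilchInvDeriv, Nat.cast_two, Nat.add_one_sub_one, pow_one,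
    mul_div_mul_left u _ two_ne_zero]

theorem schlomilchInvDeriv_nonneg (hb : 0 ≤ b) (hc : 0 ≤ c) (u : ℝ) :
    0 ≤ schlomilchInvDeriv b c u := by
  have h := (abs_le.mp (abs_div_sqrt_sq_add_le_one (a := 4 * b * c) (by positivity) u)).1
  rw [schlomilchInvDeriv]
  exact mul_nonneg (by positivity) (by linarith)

theorem integrableOn_Ioi_comp_mul_sub_div_iff (hb : 0 < b) (hc : 0 < c) :
    IntegrableOn (fun x ↦ f (c * x - b / x)) (Set.Ioi 0) ↔
      Integrable fun u ↦ schlomilchInvDeriv b c u • f u := by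
  have h := integrableOn_image_iff_integrableOn_abs_deriv_smul MeasurableSet.univ
    (fun u _ ↦ (hasDerivAt_schlomilchInv hb hc u).hasDerivWithinAt)
    (schlomilchInv_injective hb hc).injOn fun x ↦ f (c * x - b / x)
  simpa only [Set.image_univ, range_schlomilchInv hb hc, mul_schlomilchInv_sub_div hb hc,
    abs_of_nonneg (schlomilchInvDeriv_nonneg hb.le hc.le _), integrableOn_univ] using h

theorem integral_Ioi_comp_mul_sub_div (hb : 0 < b) (hc : 0 < c) (f : ℝ → E) :
    ∫ x in Set.Ioi 0, f (c * x - b / x) = ∫ u, schlomilchInvDeriv b c u • f u := by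
  have h := integral_image_eq_integral_abs_deriv_smul MeasurableSet.univ
    (fun u _ ↦ (hasDerivAt_schlomilchInv hb hc u).hasDerivWithinAt)
    (schlomilchInv_injective hb hc).injOn fun x ↦ f (c * x - b / x)
  simpa only [Set.image_univ, range_schlomilchInv hb hc, mul_schlomilchInv_sub_div hb hc,
    abs_of_nonneg (schlomilchInvDeriv_nonneg hb.le hc.le _), setIntegral_univ] using h

theorem integrable_div_sqrt_sq_add_smul {a : ℝ} (ha : 0 ≤ a) (hf : Integrable f) :
    Integrable fun u ↦ (u / √(u ^ 2 + a)) • f u := by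
  have hmeas : Measurable fun u ↦ u / √(u ^ 2 + a) := by fun_prop
  exact hf.bdd_smul 1 hmeas.aestronglyMeasurable (.of_forall (abs_div_sqrt_sq_add_le_one ha))

theorem integrableOn_Ioi_comp_mul_sub_div (hb : 0 < b) (hc : 0 < c) (hf : Integrable f) :
    IntegrableOn (fun x ↦ f (c * x - b / x)) (Set.Ioi 0) := by
  rw [integrableOn_Ioi_comp_mul_sub_div_iff hb hc]
  simp only [schlomilchInvDeriv, mul_smul, add_smul, one_smul]
  exact (hf.add (integrable_div_sqrt_sq_add_smul (by positivity) hf)).smul (2 * c)⁻¹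

theorem integral_Ioi_comp_mul_sub_div_of_even (hb : 0 < b) (hc : 0 < c) (hf : Integrable f)
    (hf_even : f.Even) :
    ∫ x in Set.Ioi 0, f (c * x - b / x) = (2 * c)⁻¹ • ∫ u, f u := by
  have hodd : Function.Odd fun u ↦ (u / √(u ^ 2 + 4 * b * c)) • f u := fun u ↦ by
    simp only [neg_sq, neg_div, neg_smul, hf_even.eq]
  rw [integral_Ioi_comp_mul_sub_div hb hc]
  simp only [schlomilchInvDeriv, mul_smul, add_smul, one_smul]
  rw [integral_smul, integral_add hf (integrable_div_sqrt_sq_add_smul (by positivity) hf),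
    integral_eq_zero_of_odd hodd, add_zero]

end CauchySchlomilch

section Subordination

variable {a r : ℝ}

theorem integrable_exp_neg_sq : Integrable fun u : ℝ ↦ exp (-u ^ 2) := by
  simpa using integrable_exp_neg_mul_sq one_pos

theorem integral_Ioi_exp_neg_sq_mul_sub_div {b c : ℝ} (hb : 0 < b) (hc : 0 < c) :
    ∫ x in Set.Ioi 0, exp (-(c * x - b / x) ^ 2) = √π / (2 * c) := by
  have hgauss : ∫ u : ℝ, exp (-u ^ 2) = √π := by simpa using integral_gaussian 1
  rw [integral_Ioi_comp_mul_sub_div_of_even hb hc integrable_exp_neg_sq (fun u ↦ by rw [neg_sq]),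
    hgauss, smul_eq_mul, inv_mul_eq_div]

theorem exp_neg_sq_div_mul_exp_neg_mul_sq (a r : ℝ) {l : ℝ} (hl : 0 < l) :
    exp (-(a ^ 2 / (4 * l))) * exp (-(l * r ^ 2)) =
      exp (-(a * r)) * exp (-(a / 2 * l ^ (-1 / 2 : ℝ) - r / l ^ (-1 / 2 : ℝ)) ^ 2) := by
  have hx : 0 < l ^ (-1 / 2 : ℝ) := rpow_pos_of_pos hl _
  have hl_eq : l = ((l ^ (-1 / 2 : ℝ)) ^ 2)⁻¹ := by
    rw [← Real.rpow_natCast, ← rpow_mul hl.le, ← Real.rpow_neg hl.le]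
    norm_num
  generalize l ^ (-1 / 2 : ℝ) = x at hx hl_eq
  rw [← exp_add, ← exp_add, hl_eq]
  congr 1
  field_simp
  ring

theorem subordination_integrand_eq_comp_rpow (a r : ℝ) {l : ℝ} (hl : 0 < l) :
    l ^ (-(3 : ℝ) / 2) * exp (-(a ^ 2 / (4 * l))) * exp (-(l * r ^ 2)) =
      2 * exp (-(a * r)) * ((|(-1 / 2 : ℝ)| * l ^ (-1 / 2 - 1 : ℝ)) •
        exp (-(a / 2 * l ^ (-1 / 2 : ℝ) - r / l ^ (-1 / 2 : ℝ)) ^ 2)) := by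
  have hexp : (-3 / 2 : ℝ) = -1 / 2 - 1 := by norm_num
  have habs : |(-1 / 2 : ℝ)| = 1 / 2 := by norm_num [abs_of_neg]
  rw [mul_assoc, exp_neg_sq_div_mul_exp_neg_mul_sq a r hl, hexp, habs, smul_eq_mul]
  ring

theorem integrableOn_subordination_integrand (ha : 0 < a) (hr : 0 < r) :
    IntegrableOn (fun l ↦ l ^ (-(3 : ℝ) / 2) * exp (-(a ^ 2 / (4 * l))) * exp (-(l * r ^ 2)))
      (Set.Ioi 0) := by
  have hsub : IntegrableOn (fun x ↦ exp (-(a / 2 * x - r / x) ^ 2)) (Set.Ioi 0) :=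
    integrableOn_Ioi_comp_mul_sub_div hr (half_pos ha) integrable_exp_neg_sq
  have hrpow := (integrableOn_Ioi_comp_rpow_iff _ (p := -1 / 2) (by norm_num)).mpr hsub
  exact IntegrableOn.congr_fun (hrpow.const_mul _)
    (fun l hl ↦ (subordination_integrand_eq_comp_rpow a r hl).symm) measurableSet_Ioi

theorem integral_subordination_integrand (ha : 0 < a) (hr : 0 < r) :
    ∫ l in Set.Ioi 0, l ^ (-(3 : ℝ) / 2) * exp (-(a ^ 2 / (4 * l))) * exp (-(l * r ^ 2)) =
      2 * √π / a * exp (-(a * r)) := by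
  rw [setIntegral_congr_fun measurableSet_Ioi
      fun l hl ↦ subordination_integrand_eq_comp_rpow a r hl,
    integral_const_mul,
    integral_comp_rpow_Ioi (fun x ↦ exp (-(a / 2 * x - r / x) ^ 2)) (by norm_num),
    integral_Ioi_exp_neg_sq_mul_sub_div hr (half_pos ha)]
  field_simp

end Subordination

/-- **Lemma (one-dimensional subordination formula).**
For `r > 0`, `e^{−r} = (1/(2√π)) ∫₀^∞ λ^{−3/2} e^{−1/(4λ)} e^{−λr²} dλ`,
the integral being absolutely convergent. -/
theorem subordination_formula (r : ℝ) (hr : 0 < r) :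
    IntegrableOn
      (fun l : ℝ => l ^ (-(3:ℝ)/2) * Real.exp (-(1/(4*l))) * Real.exp (-(l * r ^ 2)))
      (Set.Ioi 0) volume ∧
    Real.exp (-r) = (2 * Real.sqrt π)⁻¹ *
      ∫ l in Set.Ioi (0:ℝ),
        l ^ (-(3:ℝ)/2) * Real.exp (-(1/(4*l))) * Real.exp (-(l * r ^ 2)) := by
  have hint := integrableOn_subordination_integrand one_pos hr
  have hval := integral_subordination_integrand one_pos hr
  simp only [one_pow, one_mul, div_one] at hint hval
  refine ⟨hint, ?_⟩
  rw [hval, inv_mul_cancel_left₀ (by positivity)]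
end
end

section
/- For all a > 0, b > 0 and x ∈ ℝ², ∫_{ℝ²} ∇G(a, x−y) · ∇^⊥G(b, y) dy = 0, i.e. the convolution of the gradient of one heat kernel with the perpendicular gradient of another vanishes identically (as a consequence of ∂₁∂₂G(a+b) − ∂₂∂₁G(a+b) = 0). -/
/-!
The integrand `∇f(x - y) · ∇^⊥g(y)` is minus the determinant `det (∇f(x - y), ∇g(y))`.
Reflect `y` in a line through the origin and `x`. Since `f` and `g` are radial, both gradients are
reflected along, so the determinant changes sign, while Lebesgue measure is preserved. The integral
therefore equals its own negative.
-/

open MeasureTheory Real Filter Asymptotics ENNReal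

noncomputable section

/-- The `j`-th component of `∇^⊥ = (−∂_2, ∂_1)`. -/
def pdPerp (j : Fin 2) (f : E2 → ℝ) (x : E2) : ℝ :=
  if j = 0 then -pd 1 f x else pd 0 f x

lemma det_dual_apply_map_basis {R M ι : Type*} [CommRing R] [AddCommGroup M] [Module R M]
    [Fintype ι] [DecidableEq ι] (b : Module.Basis ι R M) (ℓ : ι → Module.Dual R M) (A : M →ₗ[R] M) :
    (Matrix.of fun i j => ℓ i (A (b j))).det =
      (Matrix.of fun i j => ℓ i (b j)).det * LinearMap.det A := by
  have toMatrix_pi (ℓ : ι → Module.Dual R M) :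
      LinearMap.toMatrix b (Pi.basisFun R ι) (LinearMap.pi ℓ) =
        Matrix.of fun i j => ℓ i (b j) := by
    ext i j
    simp [LinearMap.toMatrix_apply]
  rw [← toMatrix_pi ℓ, ← LinearMap.det_toMatrix b A, ← Matrix.det_mul, ← LinearMap.toMatrix_comp]
  exact congrArg Matrix.det (toMatrix_pi fun i => ℓ i ∘ₗ A).symm

lemma fderiv_map_apply_of_invariant {𝕜 E F : Type*} [NontriviallyNormedField 𝕜]
    [NormedAddCommGroup E] [NormedSpace 𝕜 E] [NormedAddCommGroup F] [NormedSpace 𝕜 F]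
    (R : E ≃L[𝕜] E) {f : E → F} (hf : ∀ z, f (R z) = f z) (z v : E) :
    fderiv 𝕜 f (R z) (R v) = fderiv 𝕜 f z v := by
  have hcomp : f ∘ R = f := funext hf
  conv_rhs => rw [← hcomp, R.comp_right_fderiv]
  rfl

lemma exists_linearIsometryEquiv_apply_eq_self_det_eq_neg_one {𝕜 E : Type*}
    [RCLike 𝕜] [NormedAddCommGroup E] [InnerProductSpace 𝕜 E] [FiniteDimensional 𝕜 E]
    (hE : 1 < Module.finrank 𝕜 E) (x : E) :
    ∃ R : E ≃ₗᵢ[𝕜] E, R x = x ∧ LinearMap.det (R : E →ₗ[𝕜] E) = -1 := by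
  obtain ⟨v, hvx, hv⟩ : ∃ v ∈ (𝕜 ∙ x)ᗮ, v ≠ 0 := by
    refine Submodule.exists_mem_ne_zero_of_ne_bot fun hbot => ?_
    have hadd := (𝕜 ∙ x).finrank_add_finrank_orthogonal
    have hle : Module.finrank 𝕜 (𝕜 ∙ x) ≤ 1 := by
      simpa using finrank_span_le_card (R := 𝕜) {x}
    rw [hbot, finrank_bot] at hadd
    omega
  refine ⟨(𝕜 ∙ v)ᗮ.reflection, ?_, ?_⟩
  · rw [Submodule.reflection_eq_self_iff, Submodule.mem_orthogonal_singleton_iff_inner_left]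
    exact Submodule.mem_orthogonal_singleton_iff_inner_right.mp hvx
  · have hdet := (𝕜 ∙ v)ᗮ.det_reflection
    rwa [Submodule.orthogonal_orthogonal, finrank_span_singleton hv, pow_one] at hdet

lemma integral_eq_zero_of_comp_eq_neg {α E : Type*} [MeasurableSpace α] {μ : Measure α}
    [NormedAddCommGroup E] [NormedSpace ℝ E] {T : α ≃ᵐ α} (hT : MeasurePreserving T μ μ)
    {F : α → E} (hF : ∀ y, F (T y) = -F y) : ∫ y, F y ∂μ = 0 := by
  have : IsAddTorsionFree E := .of_isTorsionFree ℝ E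
  rw [← self_eq_neg, ← integral_neg, ← hT.integral_comp' F]
  simp_rw [hF]

lemma sum_pd_mul_pdPerp_eq_neg_det (f g : E2 → ℝ) (p q : E2) :
    ∑ j : Fin 2, pd j f p * pdPerp j g q =
      -(Matrix.of fun i j => pd j (![f, g] i) (![p, q] i)).det := by
  simp only [Fin.sum_univ_two, Matrix.det_fin_two, Matrix.of_apply, Matrix.cons_val_zero,
    Matrix.cons_val_one, pdPerp, if_true, one_ne_zero, if_false]
  ring

lemma det_pd_map_mul_det (R : E2 ≃L[ℝ] E2) {f : Fin 2 → E2 → ℝ}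
    (hf : ∀ i z, f i (R z) = f i z) (p : Fin 2 → E2) :
    (Matrix.of fun i j => pd j (f i) (R (p i))).det * LinearMap.det (R : E2 →ₗ[ℝ] E2) =
      (Matrix.of fun i j => pd j (f i) (p i)).det := by
  have hdet := det_dual_apply_map_basis (EuclideanSpace.basisFun (Fin 2) ℝ).toBasis
    (fun i => (fderiv ℝ (f i) (R (p i)) : E2 →ₗ[ℝ] ℝ)) (R : E2 →ₗ[ℝ] E2)
  simpa [fderiv_map_apply_of_invariant R (hf _), pd] using hdet.symm

lemma sum_pd_mul_pdPerp_map_eq_neg {R : E2 ≃L[ℝ] E2}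
    (hR : LinearMap.det (R : E2 →ₗ[ℝ] E2) = -1) {f g : E2 → ℝ}
    (hf : ∀ z, f (R z) = f z) (hg : ∀ z, g (R z) = g z) (p q : E2) :
    ∑ j : Fin 2, pd j f (R p) * pdPerp j g (R q) =
      -∑ j : Fin 2, pd j f p * pdPerp j g q := by
  have hdet := det_pd_map_mul_det R (f := ![f, g]) (Fin.forall_fin_two.mpr ⟨hf, hg⟩) ![p, q]
  have hpq : ![R p, R q] = fun i => R (![p, q] i) := by
    ext i : 1
    fin_cases i <;> rfl
  rw [sum_pd_mul_pdPerp_eq_neg_det, sum_pd_mul_pdPerp_eq_neg_det, hpq, ← hdet, hR]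
  ring

lemma factorsThrough_norm_G (t : ℝ) : (G t).FactorsThrough norm := fun y z hyz => by
  simp only [G, hyz]

theorem grad_conv_gradPerp_eq_zero_general {f g : E2 → ℝ} (hf : f.FactorsThrough norm)
    (hg : g.FactorsThrough norm) (x : E2) :
    ∫ y : E2, ∑ j : Fin 2, pd j f (x - y) * pdPerp j g y = 0 := by
  obtain ⟨R, hRx, hdet⟩ :=
    exists_linearIsometryEquiv_apply_eq_self_det_eq_neg_one (𝕜 := ℝ) (E := E2) (by simp) x
  refine integral_eq_zero_of_comp_eq_neg (T := R.toMeasurableEquiv) R.measurePreserving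
    fun y => ?_
  have hreflect : x - R y = R (x - y) := by rw [map_sub, hRx]
  rw [LinearIsometryEquiv.coe_toMeasurableEquiv, hreflect]
  exact sum_pd_mul_pdPerp_map_eq_neg (R := R.toContinuousLinearEquiv) hdet
    (fun z => hf (R.norm_map z)) (fun z => hg (R.norm_map z)) (x - y) y

/-- **Lemma (orthogonality of heat-kernel gradients).**
`∫ ∇G(a, x−y) · ∇^⊥G(b, y) dy = 0` for all `a, b > 0` and `x ∈ ℝ²`. -/
theorem grad_conv_gradPerp_eq_zero (a b : ℝ) (ha : 0 < a) (hb : 0 < b) (x : E2) :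
    ∫ y : E2, ∑ j : Fin 2, pd j (G a) (x - y) * pdPerp j (G b) y = 0 :=
  grad_conv_gradPerp_eq_zero_general (factorsThrough_norm_G a) (factorsThrough_norm_G b) x
end
end

section
/- For all t > 0, 0 < s < t, τ ≥ 0 and x ∈ ℝ², ∫_{ℝ²} ∇G(t−s, x−y) · (G(s, y) ∇G(s+τ, y)) dy = (s/(4π(2s+τ)²)) ΔG(t − s²/(2s+τ), x). -/
open MeasureTheory Real Filter Asymptotics ENNReal

noncomputable section

/-- The Laplacian `Δ = ∂₁² + ∂₂²`. -/
def lap (f : E2 → ℝ) (x : E2) : ℝ := pd 0 (pd 0 f) x + pd 1 (pd 1 f) x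

/-!
Completing the square shows that a product of two heat kernels is
`G(a, x - y) G(b, y) = G(a + b, x) G(ab / (a + b), y - bx / (a + b))`. At `x = 0` this makes
`G(s, ·) ∇G(s + τ, ·)` a multiple of `∇G(s(s + τ) / (2s + τ), ·)`, so that the claim reduces to
`∫ ∇G(a, x - y) · ∇G(b, y) dy = ΔG(a + b, x)`. In the variable `u = y - bx / (a + b)` the integrand
is a quadratic polynomial times `G(ab / (a + b), u)`. The first moment of the kernel vanishes by
symmetry, and its second moments follow from `∇G(t, u) = -(u / 2t) G(t, u)` by integration by parts.
-/

open Module (finrank)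
open scoped ContDiff Gradient InnerProductSpace Laplacian

lemma laplacian_eq_sum_fderiv_fderiv {V F ι : Type*} [NormedAddCommGroup V]
    [InnerProductSpace ℝ V] [FiniteDimensional ℝ V] [NormedAddCommGroup F] [NormedSpace ℝ F]
    [Fintype ι] (e : OrthonormalBasis ι ℝ V) {f : V → F} {x : V} (hf : ContDiffAt ℝ 2 f x) :
    Δ f x = ∑ i, fderiv ℝ (fun y ↦ fderiv ℝ f y (e i)) x (e i) := by
  have hdiff : DifferentiableAt ℝ (fderiv ℝ f) x :=
    (hf.fderiv_right (m := 1) (by norm_num)).differentiableAt one_ne_zero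
  rw [InnerProductSpace.laplacian_eq_iteratedFDeriv_orthonormalBasis f e]
  simp [iteratedFDeriv_two_apply, fderiv_clm_apply hdiff (differentiableAt_const _)]

section HeatKernel

variable {V : Type*} [NormedAddCommGroup V] [InnerProductSpace ℝ V]

/-- The heat kernel of a Euclidean space `V` of any dimension, which for `V = ℝ²` is `G`. -/
def heatKernel (t : ℝ) (x : V) : ℝ :=
  exp (-‖x‖ ^ 2 / (4 * t)) / (4 * π * t) ^ (finrank ℝ V / 2 : ℝ)

lemma heatKernel_zero (t : ℝ) :
    heatKernel t (0 : V) = ((4 * π * t) ^ (finrank ℝ V / 2 : ℝ))⁻¹ := by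
  simp [heatKernel]

lemma heatKernel_neg (t : ℝ) (x : V) : heatKernel t (-x) = heatKernel t x := by
  simp only [heatKernel, norm_neg]

lemma heatKernel_nonneg {t : ℝ} (ht : 0 ≤ t) (x : V) : 0 ≤ heatKernel t x := by
  unfold heatKernel; positivity

lemma contDiff_heatKernel (t : ℝ) : ContDiff ℝ ∞ (heatKernel t : V → ℝ) :=
  ((contDiff_norm_sq ℝ).neg.div_const _).exp.div_const _

lemma hasFDerivAt_heatKernel (t : ℝ) (x : V) :
    HasFDerivAt (heatKernel t) (-(heatKernel t x / (2 * t)) • innerSL ℝ x) x := by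
  have hexponent :
      HasFDerivAt (fun y : V ↦ -‖y‖ ^ 2 / (4 * t)) (-(1 / (2 * t)) • innerSL ℝ x) x := by
    convert! (hasStrictFDerivAt_norm_sq x).hasFDerivAt.neg.mul_const (4 * t)⁻¹ using 1
    ext v
    simp only [smul_apply, neg_apply, innerSL_apply_apply, smul_eq_mul, nsmul_eq_mul,
      Nat.cast_ofNat]
    ring
  convert! hexponent.exp.mul_const ((4 * π * t) ^ (finrank ℝ V / 2 : ℝ))⁻¹ using 1
  rw [smul_smul, smul_smul, heatKernel]
  ring_nf

lemma fderiv_heatKernel_apply (t : ℝ) (x v : V) :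
    fderiv ℝ (heatKernel t) x v = -(1 / (2 * t)) * (⟪v, x⟫_ℝ * heatKernel t x) := by
  rw [(hasFDerivAt_heatKernel t x).fderiv, smul_apply, innerSL_apply_apply, smul_eq_mul,
    real_inner_comm]
  ring

lemma norm_sub_sq_div_add_norm_sq_div {a b : ℝ} (ha : a ≠ 0) (hb : b ≠ 0) (hab : a + b ≠ 0)
    (x y : V) :
    ‖x - y‖ ^ 2 / a + ‖y‖ ^ 2 / b
      = ‖x‖ ^ 2 / (a + b) + ‖y - (b / (a + b)) • x‖ ^ 2 / (a * b / (a + b)) := by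
  simp only [norm_sub_sq_real, norm_smul, inner_smul_right, mul_pow, Real.norm_eq_abs, sq_abs,
    real_inner_comm x y]
  field_simp
  ring

lemma heatKernel_sub_mul_heatKernel {a b : ℝ} (ha : 0 < a) (hb : 0 < b) (x y : V) :
    heatKernel a (x - y) * heatKernel b y
      = heatKernel (a + b) x * heatKernel (a * b / (a + b)) (y - (b / (a + b)) • x) := by
  have hexponent : -‖x - y‖ ^ 2 / (4 * a) + -‖y‖ ^ 2 / (4 * b)
      = -‖x‖ ^ 2 / (4 * (a + b))
        + -‖y - (b / (a + b)) • x‖ ^ 2 / (4 * (a * b / (a + b))) := by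
    simp only [mul_comm (4 : ℝ), ← div_div, ← add_div, neg_div, ← neg_add,
      norm_sub_sq_div_add_norm_sq_div ha.ne' hb.ne' (add_pos ha hb).ne']
  have hbase : 4 * π * a * (4 * π * b) = 4 * π * (a + b) * (4 * π * (a * b / (a + b))) := by
    field_simp
  simp only [heatKernel, div_mul_div_comm, ← exp_add]
  rw [hexponent, ← mul_rpow (by positivity) (by positivity), hbase,
    mul_rpow (by positivity) (by positivity)]

lemma heatKernel_mul_heatKernel {a b : ℝ} (ha : 0 < a) (hb : 0 < b) (x : V) :
    heatKernel a x * heatKernel b x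
      = heatKernel (a + b) (0 : V) * heatKernel (a * b / (a + b)) x := by
  simpa [heatKernel_neg] using heatKernel_sub_mul_heatKernel ha hb 0 x

section Gradient

variable [CompleteSpace V]

lemma gradient_heatKernel (t : ℝ) (x : V) :
    ∇ (heatKernel t) x = -(heatKernel t x / (2 * t)) • x := by
  refine HasGradientAt.gradient (hasGradientAt_iff_hasFDerivAt.2 ?_)
  convert! hasFDerivAt_heatKernel t x using 1
  ext v
  simp

lemma heatKernel_smul_gradient_heatKernel {a b : ℝ} (ha : 0 < a) (hb : 0 < b) (x : V) :
    heatKernel a x • ∇ (heatKernel b) x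
      = (a / ((a + b) * (4 * π * (a + b)) ^ (finrank ℝ V / 2 : ℝ)))
        • ∇ (heatKernel (a * b / (a + b))) x := by
  have hmul := heatKernel_mul_heatKernel ha hb x
  rw [heatKernel_zero] at hmul
  simp only [gradient_heatKernel, smul_smul]
  congr 1
  calc heatKernel a x * -(heatKernel b x / (2 * b))
      = -(heatKernel a x * heatKernel b x) / (2 * b) := by ring
    _ = _ := by rw [hmul]; field_simp

lemma inner_gradient_heatKernel_sub {a b : ℝ} (ha : 0 < a) (hb : 0 < b) (x u : V) :
    ⟪∇ (heatKernel a) (x - (u + (b / (a + b)) • x)),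
        ∇ (heatKernel b) (u + (b / (a + b)) • x)⟫_ℝ
      = heatKernel (a + b) x / (4 * a * b)
        * (a * b / (a + b) ^ 2 * ‖x‖ ^ 2 * heatKernel (a * b / (a + b)) u
          + (a - b) / (a + b) * (⟪x, u⟫_ℝ * heatKernel (a * b / (a + b)) u)
          - ‖u‖ ^ 2 * heatKernel (a * b / (a + b)) u) := by
  have hmul := heatKernel_sub_mul_heatKernel ha hb x (u + (b / (a + b)) • x)
  rw [add_sub_cancel_right] at hmul
  have hinner : ⟪x - (u + (b / (a + b)) • x), u + (b / (a + b)) • x⟫_ℝ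
      = a * b / (a + b) ^ 2 * ‖x‖ ^ 2 + (a - b) / (a + b) * ⟪x, u⟫_ℝ - ‖u‖ ^ 2 := by
    simp only [inner_sub_left, inner_add_left, inner_add_right, real_inner_smul_left,
      real_inner_smul_right, real_inner_self_eq_norm_sq, real_inner_comm x u]
    rw [norm_smul, mul_pow, Real.norm_eq_abs, sq_abs]
    field_simp
    ring
  simp only [gradient_heatKernel, real_inner_smul_left, real_inner_smul_right, hinner]
  linear_combination (a * b / (a + b) ^ 2 * ‖x‖ ^ 2 + (a - b) / (a + b) * ⟪x, u⟫_ℝ - ‖u‖ ^ 2)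
    / (4 * a * b) * hmul

end Gradient

lemma exists_norm_pow_mul_heatKernel_le {t : ℝ} (ht : 0 < t) (n : ℕ) :
    ∃ C, ∀ u : V, ‖u‖ ^ n * heatKernel t u ≤ C * heatKernel (2 * t) u := by
  refine ⟨n.factorial * exp (2 * t) * 2 ^ (finrank ℝ V / 2 : ℝ), fun u ↦ ?_⟩
  have hpow : ‖u‖ ^ n ≤ n.factorial * exp ‖u‖ := by
    have := pow_div_factorial_le_exp ‖u‖ (norm_nonneg u) n
    rwa [div_le_iff₀' (by positivity)] at this
  have hexponent : ‖u‖ + -‖u‖ ^ 2 / (4 * t) ≤ 2 * t + -‖u‖ ^ 2 / (4 * (2 * t)) := by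
    field_simp
    nlinarith [sq_nonneg (‖u‖ - 4 * t)]
  have hnorm : (4 * π * (2 * t)) ^ (finrank ℝ V / 2 : ℝ)
      = 2 ^ (finrank ℝ V / 2 : ℝ) * (4 * π * t) ^ (finrank ℝ V / 2 : ℝ) := by
    rw [← mul_rpow zero_le_two (by positivity)]
    ring_nf
  calc ‖u‖ ^ n * heatKernel t u
      ≤ n.factorial * exp ‖u‖ * heatKernel t u := by
        gcongr
        exact heatKernel_nonneg ht.le u
    _ = n.factorial * exp (‖u‖ + -‖u‖ ^ 2 / (4 * t)) / (4 * π * t) ^ (finrank ℝ V / 2 : ℝ) := by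
        rw [exp_add, heatKernel]; ring
    _ ≤ n.factorial * exp (2 * t + -‖u‖ ^ 2 / (4 * (2 * t)))
          / (4 * π * t) ^ (finrank ℝ V / 2 : ℝ) := by gcongr
    _ = n.factorial * exp (2 * t) * 2 ^ (finrank ℝ V / 2 : ℝ) * heatKernel (2 * t) u := by
        rw [exp_add, heatKernel, hnorm]; field_simp

variable [FiniteDimensional ℝ V]

lemma laplacian_heatKernel (t : ℝ) (x : V) :
    Δ (heatKernel t : V → ℝ) x
      = (‖x‖ ^ 2 / (4 * t ^ 2) - finrank ℝ V / (2 * t)) * heatKernel t x := by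
  have hsecond (v : V) (hv : ‖v‖ = 1) : fderiv ℝ (fun y ↦ fderiv ℝ (heatKernel t) y v) x v
      = (⟪v, x⟫_ℝ ^ 2 / (4 * t ^ 2) - 1 / (2 * t)) * heatKernel t x := by
    have hderiv : HasFDerivAt (fun y ↦ -(1 / (2 * t)) * (⟪v, y⟫_ℝ * heatKernel t y)) _ x :=
      ((innerSL ℝ v).hasFDerivAt.mul (hasFDerivAt_heatKernel t x)).const_mul _
    simp_rw [fderiv_heatKernel_apply]
    rw [hderiv.fderiv]
    simp only [add_apply, smul_apply, innerSL_apply_apply, smul_eq_mul, real_inner_comm v x,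
      real_inner_self_eq_norm_sq, hv]
    ring
  rw [laplacian_eq_sum_fderiv_fderiv (stdOrthonormalBasis ℝ V)
    ((contDiff_heatKernel t).of_le (by norm_cast)).contDiffAt]
  simp only [hsecond _ (OrthonormalBasis.norm_eq_one _ _), ← Finset.sum_mul,
    Finset.sum_sub_distrib, ← Finset.sum_div, OrthonormalBasis.sum_sq_inner_right]
  simp [div_eq_mul_inv]

variable [MeasurableSpace V] [BorelSpace V]

lemma integral_heatKernel {t : ℝ} (ht : 0 < t) : ∫ u : V, heatKernel t u = 1 := by
  have hexp (u : V) : exp (-‖u‖ ^ 2 / (4 * t)) = exp (-(4 * t)⁻¹ * ‖u‖ ^ 2) := by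
    ring_nf
  simp only [heatKernel, hexp]
  rw [integral_div, GaussianFourier.integral_rexp_neg_mul_sq_norm (by positivity), div_inv_eq_mul,
    mul_left_comm, mul_assoc, div_self (by positivity)]

lemma integrable_heatKernel {t : ℝ} (ht : 0 < t) : Integrable (heatKernel t : V → ℝ) :=
  .of_integral_ne_zero (by simp [integral_heatKernel ht])

lemma integrable_norm_pow_mul_heatKernel {t : ℝ} (ht : 0 < t) (n : ℕ) :
    Integrable fun u : V ↦ ‖u‖ ^ n * heatKernel t u := by
  have hmeas : AEStronglyMeasurable fun u : V ↦ ‖u‖ ^ n * heatKernel t u :=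
    ((continuous_norm.pow n).mul (contDiff_heatKernel t).continuous).aestronglyMeasurable
  obtain ⟨C, hC⟩ := exists_norm_pow_mul_heatKernel_le (V := V) ht n
  refine ((integrable_heatKernel (mul_pos two_pos ht)).const_mul C).mono' hmeas
    (.of_forall fun u ↦ ?_)
  rw [norm_of_nonneg (mul_nonneg (by positivity) (heatKernel_nonneg ht.le u))]
  exact hC u

lemma integrable_mul_heatKernel_of_norm_le_pow {t : ℝ} (ht : 0 < t) {f : V → ℝ} {C : ℝ} {n : ℕ}
    (hf : AEStronglyMeasurable f) (hfC : ∀ u, ‖f u‖ ≤ C * ‖u‖ ^ n) :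
    Integrable fun u ↦ f u * heatKernel t u := by
  refine ((integrable_norm_pow_mul_heatKernel ht n).const_mul C).mono'
    (hf.mul (contDiff_heatKernel t).continuous.aestronglyMeasurable) (.of_forall fun u ↦ ?_)
  have hG := heatKernel_nonneg ht.le u
  rw [norm_mul, norm_of_nonneg hG, ← mul_assoc]
  gcongr
  exact hfC u

lemma integrable_inner_mul_heatKernel {t : ℝ} (ht : 0 < t) (v : V) :
    Integrable fun u ↦ ⟪v, u⟫_ℝ * heatKernel t u :=
  integrable_mul_heatKernel_of_norm_le_pow (n := 1) ht (by fun_prop)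
    fun u ↦ by simpa using abs_real_inner_le_norm v u

lemma integrable_inner_mul_inner_mul_heatKernel {t : ℝ} (ht : 0 < t) (v w : V) :
    Integrable fun u ↦ ⟪v, u⟫_ℝ * ⟪w, u⟫_ℝ * heatKernel t u := by
  refine integrable_mul_heatKernel_of_norm_le_pow (C := ‖v‖ * ‖w‖) (n := 2) ht (by fun_prop)
    fun u ↦ ?_
  calc ‖⟪v, u⟫_ℝ * ⟪w, u⟫_ℝ‖ ≤ (‖v‖ * ‖u‖) * (‖w‖ * ‖u‖) := by
        rw [norm_mul]; gcongr <;> exact norm_inner_le_norm ..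
    _ = ‖v‖ * ‖w‖ * ‖u‖ ^ 2 := by ring

lemma integral_inner_mul_heatKernel (t : ℝ) (v : V) :
    ∫ u, ⟪v, u⟫_ℝ * heatKernel t u = 0 := by
  have hodd := integral_neg_eq_self (fun u ↦ ⟪v, u⟫_ℝ * heatKernel t u) volume
  simp only [inner_neg_right, heatKernel_neg, neg_mul, integral_neg] at hodd
  linarith

lemma integral_inner_mul_inner_mul_heatKernel {t : ℝ} (ht : 0 < t) (v w : V) :
    ∫ u, ⟪v, u⟫_ℝ * ⟪w, u⟫_ℝ * heatKernel t u = 2 * t * ⟪v, w⟫_ℝ := by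
  have hparts : ∫ u, innerSL ℝ v u * fderiv ℝ (heatKernel t) u w
      = -∫ u, fderiv ℝ (innerSL ℝ v) u w * heatKernel t u := by
    refine integral_mul_fderiv_eq_neg_fderiv_mul_of_integrable ?_ ?_ ?_
      (fun _ _ ↦ (innerSL ℝ v).differentiableAt)
      (fun u _ ↦ (hasFDerivAt_heatKernel t u).differentiableAt)
    · simpa only [ContinuousLinearMap.fderiv, innerSL_apply_apply] using
        (integrable_heatKernel ht).const_mul ⟪v, w⟫_ℝ
    · simpa [fderiv_heatKernel_apply, mul_left_comm, mul_assoc] using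
        (integrable_inner_mul_inner_mul_heatKernel ht v w).const_mul (-(1 / (2 * t)))
    · simpa using integrable_inner_mul_heatKernel ht v
  simp only [fderiv_heatKernel_apply, ContinuousLinearMap.fderiv, innerSL_apply_apply,
    integral_const_mul, mul_left_comm _ (-(1 / (2 * t))), ← mul_assoc ⟪v, _⟫_ℝ,
    integral_heatKernel ht] at hparts
  field_simp at hparts
  linarith

lemma integral_norm_sq_mul_heatKernel {t : ℝ} (ht : 0 < t) :
    ∫ u : V, ‖u‖ ^ 2 * heatKernel t u = 2 * t * finrank ℝ V := by
  let e := stdOrthonormalBasis ℝ V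
  have hsum (u : V) : ‖u‖ ^ 2 * heatKernel t u
      = ∑ i, ⟪e i, u⟫_ℝ * ⟪e i, u⟫_ℝ * heatKernel t u := by
    simp only [← e.sum_sq_inner_right u, Finset.sum_mul, sq]
  simp_rw [hsum]
  rw [integral_finsetSum _ fun i _ ↦ integrable_inner_mul_inner_mul_heatKernel ht _ _]
  simp only [integral_inner_mul_inner_mul_heatKernel ht, real_inner_self_eq_norm_sq, e.norm_eq_one]
  simp [mul_comm]

theorem integral_inner_gradient_heatKernel {a b : ℝ} (ha : 0 < a) (hb : 0 < b) (x : V) :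
    ∫ y, ⟪∇ (heatKernel a) (x - y), ∇ (heatKernel b) y⟫_ℝ = Δ (heatKernel (a + b) : V → ℝ) x := by
  have hab : 0 < a * b / (a + b) := by positivity
  rw [← integral_add_right_eq_self _ ((b / (a + b)) • x)]
  simp_rw [inner_gradient_heatKernel_sub ha hb]
  have h₀ := (integrable_heatKernel (V := V) hab).const_mul (a * b / (a + b) ^ 2 * ‖x‖ ^ 2)
  have h₁ := (integrable_inner_mul_heatKernel hab x).const_mul ((a - b) / (a + b))
  rw [integral_const_mul, integral_sub (h₀.fun_add h₁) (integrable_norm_pow_mul_heatKernel hab 2),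
    integral_add h₀ h₁, integral_const_mul, integral_const_mul, integral_heatKernel hab,
    integral_inner_mul_heatKernel, integral_norm_sq_mul_heatKernel hab, laplacian_heatKernel]
  field_simp
  ring

theorem grad_conv_kernel_grad_general (t s τ : ℝ) (hs : 0 < s) (hst : s < t) (hsτ : 0 < s + τ)
    (x : V) :
    ∫ y, ⟪∇ (heatKernel (t - s)) (x - y), heatKernel s y • ∇ (heatKernel (s + τ)) y⟫_ℝ
      = s / ((2 * s + τ) * (4 * π * (2 * s + τ)) ^ (finrank ℝ V / 2 : ℝ))
        * Δ (heatKernel (t - s ^ 2 / (2 * s + τ)) : V → ℝ) x := by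
  have hsum : s + (s + τ) = 2 * s + τ := by ring
  have hpos : 0 < 2 * s + τ := by linarith
  have htime : t - s ^ 2 / (2 * s + τ) = (t - s) + s * (s + τ) / (2 * s + τ) := by
    have hfrac : s ^ 2 / (2 * s + τ) + s * (s + τ) / (2 * s + τ) = s := by
      rw [← add_div, div_eq_iff hpos.ne']
      ring
    linear_combination -hfrac
  simp_rw [heatKernel_smul_gradient_heatKernel hs hsτ, hsum, real_inner_smul_right]
  rw [integral_const_mul, htime,
    integral_inner_gradient_heatKernel (sub_pos.2 hst) (by positivity)]

end HeatKernel

section Plane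

lemma G_eq_heatKernel : G = heatKernel := by
  ext t x
  simp [G, heatKernel, div_eq_inv_mul]

lemma sum_pd_mul_pd (f g : E2 → ℝ) (x y : E2) :
    ∑ j, pd j f x * pd j g y = ⟪∇ f x, ∇ g y⟫_ℝ := by
  rw [← (EuclideanSpace.basisFun (Fin 2) ℝ).sum_inner_mul_inner]
  simp [pd, inner_gradient_left, inner_gradient_right]

lemma lap_eq_laplacian {f : E2 → ℝ} {x : E2} (hf : ContDiffAt ℝ 2 f x) : lap f x = Δ f x := by
  rw [laplacian_eq_sum_fderiv_fderiv (EuclideanSpace.basisFun (Fin 2) ℝ) hf]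
  simp only [lap, pd, Fin.sum_univ_two, EuclideanSpace.basisFun_apply]
  rfl

end Plane

/-- **Lemma (convolution identity for heat-kernel gradients).**
`∫ ∇G(t−s, x−y) · (G(s,y) ∇G(s+τ, y)) dy = (s/(4π(2s+τ)²)) ΔG(t − s²/(2s+τ), x)`. -/
theorem grad_conv_kernel_grad (t s τ : ℝ) (ht : 0 < t) (hs : 0 < s) (hst : s < t)
    (hτ : 0 ≤ τ) (x : E2) :
    ∫ y : E2, ∑ j : Fin 2, pd j (G (t - s)) (x - y) * (G s y * pd j (G (s + τ)) y)
      = s / (4 * π * (2 * s + τ) ^ 2) * lap (G (t - s ^ 2 / (2 * s + τ))) x := by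
  have hconst : s / ((2 * s + τ) * (4 * π * (2 * s + τ)) ^ (finrank ℝ E2 / 2 : ℝ))
      = s / (4 * π * (2 * s + τ) ^ 2) := by
    rw [finrank_euclideanSpace_fin, Nat.cast_ofNat, div_self two_ne_zero, Real.rpow_one]
    ring
  have h := grad_conv_kernel_grad_general t s τ hs hst (by linarith) x
  simp_rw [real_inner_smul_right, ← sum_pd_mul_pd, Finset.mul_sum, mul_left_comm (heatKernel s _),
    hconst,
    ← lap_eq_laplacian ((contDiff_heatKernel _).of_le (by norm_cast)).contDiffAt] at h
  simpa only [G_eq_heatKernel] using h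
end
end

section
/- For every integer k ≥ 0 and every t > 0, the triple integral ∫₀ᵗ ∫₀^∞ ∫₀^∞ λ^{−3/2} e^{−1/(4λ)} s^{−3} (s²/(2s+σ²λ))^{k+2} dλ dσ ds is finite and equals 2π · ((2k−1)!!/(2k+2)!!) · (t/2)^{k+1/2}, where (−1)!! = 1. In particular its value scales as t^{k+1/2}. -/
open MeasureTheory Real Filter Asymptotics ENNReal

noncomputable section

/- The substitution `x = σ √(λ / (2s))` turns the integrand into the product
`(s / 2) ^ (k - 1/2) * (λ⁻² e^{-1/(4λ)} / 4) * (1 + x²)^{-(k + 2)}` of functions of the single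
variables `s`, `λ` and `x`. The triple integral is therefore a product: the `s`-factor is the
integral of a power, the `λ`-factor is an inverse-gamma density of total mass `1`, and the
`x`-factor is a Wallis integral. -/

open Set
open scoped Nat Topology

section Dilation

variable {α β γ : Type*} [MeasurableSpace α] [MeasurableSpace β] [MeasurableSpace γ]

lemma measurePreserving_prod_left_comm (μ : Measure α) (ν : Measure β) (ρ : Measure γ)
    [SFinite μ] [SFinite ν] [SFinite ρ] :
    MeasurePreserving (fun p : α × β × γ => (p.2.1, p.1, p.2.2))
      (μ.prod (ν.prod ρ)) (ν.prod (μ.prod ρ)) :=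
  (measurePreserving_prodAssoc ν μ ρ).comp <|
    ((Measure.measurePreserving_swap (μ := μ) (ν := ν)).prod (.id ρ)).comp
      ((measurePreserving_prodAssoc μ ν ρ).symm _)

lemma integrableOn_Ioi_mul_comp_mul {g : ℝ → ℝ} (hg : IntegrableOn g (Ioi 0)) {c : ℝ} (hc : 0 < c) :
    IntegrableOn (fun x => c * g (c * x)) (Ioi 0) :=
  ((integrableOn_Ioi_comp_mul_left_iff g 0 hc).2 (by rwa [mul_zero])).const_mul c

lemma integral_Ioi_mul_comp_mul (g : ℝ → ℝ) {c : ℝ} (hc : 0 < c) :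
    ∫ x in Ioi 0, c * g (c * x) = ∫ x in Ioi 0, g x := by
  rw [integral_const_mul, ← smul_eq_mul, integral_comp_mul_left_Ioi' g 0 hc, mul_zero]

variable {ν : Measure β} [SFinite ν] {g : ℝ → ℝ} {c v : β → ℝ}

lemma integrable_mul_dilation (hgm : Measurable g) (hg : IntegrableOn g (Ioi 0))
    (hcm : Measurable c) (hc : ∀ᵐ y ∂ν, 0 < c y) (hv : Integrable v ν) :
    Integrable (fun p : ℝ × β => v p.2 * (c p.2 * g (c p.2 * p.1)))
      ((volume.restrict (Ioi 0)).prod ν) := by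
  have hm : AEStronglyMeasurable (fun p : ℝ × β => v p.2 * (c p.2 * g (c p.2 * p.1)))
      ((volume.restrict (Ioi 0)).prod ν) :=
    hv.aestronglyMeasurable.comp_snd.mul
      (by fun_prop : Measurable fun p : ℝ × β => c p.2 * g (c p.2 * p.1)).aestronglyMeasurable
  refine (integrable_prod_iff' hm).2 ⟨?_, ?_⟩
  · filter_upwards [hc] with y hy
    exact (integrableOn_Ioi_mul_comp_mul hg hy).const_mul (v y)
  · refine (hv.norm.mul_const (∫ x in Ioi 0, ‖g x‖)).congr ?_
    filter_upwards [hc] with y hy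
    simp_rw [norm_mul, Real.norm_of_nonneg hy.le]
    rw [integral_const_mul, integral_Ioi_mul_comp_mul (fun x => ‖g x‖) hy]

lemma integral_integral_mul_dilation (hgm : Measurable g) (hg : IntegrableOn g (Ioi 0))
    (hcm : Measurable c) (hc : ∀ᵐ y ∂ν, 0 < c y) (hv : Integrable v ν) :
    ∫ x in Ioi 0, ∫ y, v y * (c y * g (c y * x)) ∂ν = (∫ y, v y ∂ν) * ∫ x in Ioi 0, g x := by
  have inner : ∀ᵐ y ∂ν, ∫ x in Ioi 0, v y * (c y * g (c y * x)) = v y * ∫ x in Ioi 0, g x := by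
    filter_upwards [hc] with y hy
    rw [integral_const_mul, integral_Ioi_mul_comp_mul g hy]
  rw [integral_integral_swap (integrable_mul_dilation hgm hg hcm hc hv), integral_congr_ae inner,
    integral_mul_const]

end Dilation

section Wallis

lemma inv_one_add_sq_pow_succ_le (n : ℕ) (x : ℝ) : ((1 + x ^ 2)⁻¹) ^ (n + 1) ≤ (1 + x ^ 2)⁻¹ :=
  pow_le_of_le_one (by positivity) (inv_le_one_of_one_le₀ (le_add_of_nonneg_right (sq_nonneg x)))
    n.succ_ne_zero

lemma integrable_inv_one_add_sq_pow (n : ℕ) :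
    Integrable fun x : ℝ => ((1 + x ^ 2)⁻¹) ^ (n + 1) := by
  refine integrable_inv_one_add_sq.mono' (by fun_prop) (.of_forall fun x => ?_)
  rw [Real.norm_of_nonneg (by positivity)]
  exact inv_one_add_sq_pow_succ_le n x

lemma hasDerivAt_mul_inv_one_add_sq_pow (n : ℕ) (x : ℝ) :
    HasDerivAt (fun x : ℝ => x * ((1 + x ^ 2)⁻¹) ^ (n + 1))
      ((2 * n + 2) * ((1 + x ^ 2)⁻¹) ^ (n + 2) - (2 * n + 1) * ((1 + x ^ 2)⁻¹) ^ (n + 1)) x := by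
  have hu : x ^ 2 * (1 + x ^ 2)⁻¹ = 1 - (1 + x ^ 2)⁻¹ := by field_simp; ring
  have hsq : HasDerivAt (fun x : ℝ => 1 + x ^ 2) (2 * x) x := by
    simpa using (hasDerivAt_pow 2 x).const_add 1
  refine ((hasDerivAt_id x).mul ((hsq.fun_inv (by positivity)).fun_pow (n + 1))).congr_deriv ?_
  simp only [id, Nat.add_sub_cancel, div_eq_mul_inv, ← inv_pow]
  push_cast
  linear_combination (-2 * ((n : ℝ) + 1) * ((1 + x ^ 2)⁻¹) ^ (n + 1)) * hu

lemma tendsto_mul_inv_one_add_sq_pow_atTop (n : ℕ) :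
    Tendsto (fun x : ℝ => x * ((1 + x ^ 2)⁻¹) ^ (n + 1)) atTop (𝓝 0) := by
  refine squeeze_zero' ?_ ?_ tendsto_inv_atTop_zero
  all_goals filter_upwards [eventually_gt_atTop 0] with x hx
  · positivity
  · calc x * ((1 + x ^ 2)⁻¹) ^ (n + 1) ≤ x * (1 + x ^ 2)⁻¹ := by
          gcongr; exact inv_one_add_sq_pow_succ_le n x
      _ ≤ x * (x ^ 2)⁻¹ := by gcongr; linarith
      _ = x⁻¹ := by field_simp

lemma integral_Ioi_inv_one_add_sq_pow_succ (n : ℕ) :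
    ∫ x in Ioi (0 : ℝ), ((1 + x ^ 2)⁻¹) ^ (n + 2) =
      (2 * n + 1 : ℝ) / (2 * n + 2) * ∫ x in Ioi (0 : ℝ), ((1 + x ^ 2)⁻¹) ^ (n + 1) := by
  have hi (m : ℕ) (a : ℝ) : IntegrableOn (fun x : ℝ => a * ((1 + x ^ 2)⁻¹) ^ (m + 1)) (Ioi 0) :=
    (integrable_inv_one_add_sq_pow m).integrableOn.const_mul a
  have h := integral_Ioi_of_hasDerivAt_of_tendsto' (a := 0)
    (fun x _ => hasDerivAt_mul_inv_one_add_sq_pow n x) ((hi (n + 1) _).sub (hi n _))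
    (tendsto_mul_inv_one_add_sq_pow_atTop n)
  rw [integral_sub (hi (n + 1) _) (hi n _), integral_const_mul, integral_const_mul, zero_mul,
    sub_zero, sub_eq_zero] at h
  rw [div_mul_eq_mul_div, _root_.eq_div_iff (by positivity), mul_comm, h]

lemma integral_Ioi_inv_one_add_sq_pow (n : ℕ) :
    ∫ x in Ioi (0 : ℝ), ((1 + x ^ 2)⁻¹) ^ (n + 1) = π / 2 * ((2 * n - 1)‼ / (2 * n)‼) := by
  induction n with
  | zero => simp
  | succ n ih =>
    rw [integral_Ioi_inv_one_add_sq_pow_succ, ih, Nat.mul_succ, Nat.doubleFactorial_add_two,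
      Nat.add_succ_sub_one, Nat.doubleFactorial_add_one]
    push_cast
    field_simp

end Wallis

section InverseGamma

-- The left-hand side has the shape that `integral_comp_rpow_Ioi` asks for at `p = -1`.
lemma rpow_mul_exp_neg_div_eqOn (a b : ℝ) :
    EqOn (fun x : ℝ => (|(-1 : ℝ)| * x ^ ((-1 : ℝ) - 1)) •
        ((x ^ (-1 : ℝ)) ^ (a - 1) * exp (-(b * x ^ (-1 : ℝ)))))
      (fun x => x ^ (-a - 1) * exp (-(b / x))) (Ioi 0) := by
  intro x hx
  have hpow : x ^ (-a - 1) = x ^ ((-1 : ℝ) - 1) * (x ^ (-1 : ℝ)) ^ (a - 1) := by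
    rw [← rpow_mul (le_of_lt hx), ← rpow_add hx]
    ring_nf
  simp only [hpow, abs_neg, abs_one, one_mul, smul_eq_mul, mul_assoc, rpow_neg_one x,
    div_eq_mul_inv]

variable {a b : ℝ}

lemma integrableOn_Ioi_rpow_mul_exp_neg_div (ha : 0 < a) (hb : 0 < b) :
    IntegrableOn (fun x => x ^ (-a - 1) * exp (-(b / x))) (Ioi 0) := by
  rw [← integrableOn_congr_fun (rpow_mul_exp_neg_div_eqOn a b) measurableSet_Ioi,
    integrableOn_Ioi_comp_rpow_iff (fun y => y ^ (a - 1) * exp (-(b * y))) (by norm_num)]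
  simpa using integrableOn_rpow_mul_exp_neg_mul_rpow (by linarith : -1 < a - 1) one_pos hb

lemma integral_Ioi_rpow_mul_exp_neg_div (ha : 0 < a) (hb : 0 < b) :
    ∫ x in Ioi 0, x ^ (-a - 1) * exp (-(b / x)) = (1 / b) ^ a * Gamma a := by
  rw [← setIntegral_congr_fun measurableSet_Ioi (rpow_mul_exp_neg_div_eqOn a b),
    integral_comp_rpow_Ioi (fun y => y ^ (a - 1) * exp (-(b * y))) (by norm_num),
    integral_rpow_mul_exp_neg_mul_Ioi ha hb]

end InverseGamma

section Power

variable {r : ℝ}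

lemma integrableOn_Ioc_div_rpow (hr : -1 < r) (c t : ℝ) :
    IntegrableOn (fun s : ℝ => (s / c) ^ r) (Ioc 0 t) := by
  rcases eq_or_ne c 0 with rfl | hc
  · simp
  have h : IntervalIntegrable (fun x : ℝ => x ^ r) volume (0 / c) (t / c) :=
    intervalIntegral.intervalIntegrable_rpow' hr
  simpa [div_eq_mul_inv, hc] using (h.comp_mul_right (c := c⁻¹)).1

lemma integral_Ioc_div_rpow (hr : -1 < r) {c t : ℝ} (ht : 0 ≤ t) (hc : c ≠ 0) :
    ∫ s in Ioc 0 t, (s / c) ^ r = c * ((t / c) ^ (r + 1) / (r + 1)) := by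
  rw [← intervalIntegral.integral_of_le ht,
    intervalIntegral.integral_comp_div (fun x => x ^ r) hc, integral_rpow (.inl hr), zero_div,
    zero_rpow (by linarith), sub_zero, smul_eq_mul]

end Power

section Factorization

/-- The integrand `λ^{-3/2} e^{-1/(4λ)} s^{-3} (s² / (2s + σ²λ))^{k+2}` of the distortion
coefficient, with its arguments in the order of the iterated integral. -/
def distortionIntegrand (k : ℕ) (s σ l : ℝ) : ℝ :=
  l ^ (-(3 : ℝ) / 2) * exp (-(1 / (4 * l))) * (s ^ 3)⁻¹ *
    (s ^ 2 / (2 * s + σ ^ 2 * l)) ^ (k + 2)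

/-- The inverse-gamma density `λ⁻² e^{-1/(4λ)} / 4` of shape `1` and scale `1/4`, the `λ`-factor of
`distortionIntegrand`. No cutoff is imposed on `λ ≤ 0`, and the exponent `-2` is written as `-a - 1`
at the shape `a = 1`. -/
def inverseGammaWeight (l : ℝ) : ℝ := l ^ (-1 - 1 : ℝ) * exp (-(1 / 4 / l)) / 4

lemma integrableOn_inverseGammaWeight : IntegrableOn inverseGammaWeight (Ioi 0) :=
  (integrableOn_Ioi_rpow_mul_exp_neg_div one_pos (by norm_num)).div_const 4

lemma integral_inverseGammaWeight : ∫ l in Ioi 0, inverseGammaWeight l = 1 := by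
  simp only [inverseGammaWeight]
  rw [integral_div, integral_Ioi_rpow_mul_exp_neg_div one_pos (by norm_num)]
  norm_num

lemma distortionIntegrand_eq (k : ℕ) {s l : ℝ} (hs : 0 < s) (hl : 0 < l) (σ : ℝ) :
    distortionIntegrand k s σ l = (s / 2) ^ ((k : ℝ) - 1 / 2) * inverseGammaWeight l *
      (√(l / (2 * s)) * ((1 + (√(l / (2 * s)) * σ) ^ 2)⁻¹) ^ (k + 2)) := by
  have hratio : s ^ 2 / (2 * s + σ ^ 2 * l) = s / 2 * (1 + (√(l / (2 * s)) * σ) ^ 2)⁻¹ := by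
    rw [mul_pow, sq_sqrt (by positivity)]
    field_simp
  have hl_pow : l ^ (-(3 : ℝ) / 2) = l ^ (-1 - 1 : ℝ) * √l := by
    rw [sqrt_eq_rpow, ← rpow_add hl]
    norm_num
  have hs_pow : (s ^ 3)⁻¹ * (s / 2) ^ (k + 2) = (s / 2) ^ ((k : ℝ) - 1 / 2) / (4 * √(2 * s)) := by
    rw [rpow_sub (by positivity), Real.rpow_natCast, ← sqrt_eq_rpow]
    have : √(2 * s) = 2 * √(s / 2) := by
      rw [show 2 * s = 2 ^ 2 * (s / 2) by ring, sqrt_mul (by norm_num), sqrt_sq zero_le_two]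
    rw [this]
    field_simp
    rw [sq_sqrt (by positivity)]
    ring
  have hexp : 1 / 4 / l = 1 / (4 * l) := by field_simp
  rw [distortionIntegrand, inverseGammaWeight, hratio, mul_pow, hl_pow, hexp,
    sqrt_div hl.le (2 * s)]
  linear_combination (l ^ (-1 - 1 : ℝ) * √l * exp (-(1 / (4 * l))) *
    ((1 + (√l / √(2 * s) * σ) ^ 2)⁻¹) ^ (k + 2)) * hs_pow

lemma integrableOn_distortionIntegrand (k : ℕ) (t : ℝ) :
    IntegrableOn (fun p : ℝ × ℝ × ℝ => distortionIntegrand k p.1 p.2.1 p.2.2)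
      (Ioc 0 t ×ˢ Ioi 0 ×ˢ Ioi 0) := by
  have hk : -1 < (k : ℝ) - 1 / 2 := by linarith [k.cast_nonneg (α := ℝ)]
  have hweight : Integrable
      (fun y : ℝ × ℝ => (y.1 / 2) ^ ((k : ℝ) - 1 / 2) * inverseGammaWeight y.2)
      ((volume.restrict (Ioc 0 t)).prod (volume.restrict (Ioi 0))) :=
    (integrableOn_Ioc_div_rpow hk 2 t).mul_prod integrableOn_inverseGammaWeight
  have hscale : ∀ᵐ y : ℝ × ℝ ∂(volume.restrict (Ioc 0 t)).prod (volume.restrict (Ioi 0)),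
      0 < √(y.2 / (2 * y.1)) := by
    rw [Measure.prod_restrict]
    filter_upwards [ae_restrict_mem (measurableSet_Ioc.prod measurableSet_Ioi)] with y ⟨hs, hl⟩
    exact sqrt_pos.2 (div_pos hl (mul_pos two_pos hs.1))
  have hprod := (measurePreserving_prod_left_comm _ _ _).integrable_comp_of_integrable <|
    integrable_mul_dilation (by fun_prop)
      (integrable_inv_one_add_sq_pow (k + 1)).integrableOn (by fun_prop) hscale hweight
  rw [Measure.prod_restrict, Measure.prod_restrict] at hprod
  refine hprod.congr ?_
  filter_upwards [ae_restrict_mem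
    (measurableSet_Ioc.prod (measurableSet_Ioi.prod measurableSet_Ioi))] with p ⟨hs, _, hl⟩
  exact (distortionIntegrand_eq k hs.1 hl p.2.1).symm

lemma integral_integral_distortionIntegrand (k : ℕ) {s : ℝ} (hs : 0 < s) :
    ∫ σ in Ioi 0, ∫ l in Ioi 0, distortionIntegrand k s σ l =
      (s / 2) ^ ((k : ℝ) - 1 / 2) * (π / 2 * ((2 * k + 1)‼ / (2 * k + 2)‼)) := by
  have hscale : ∀ᵐ l ∂volume.restrict (Ioi (0 : ℝ)), 0 < √(l / (2 * s)) := by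
    filter_upwards [ae_restrict_mem measurableSet_Ioi] with l hl
    exact sqrt_pos.2 (div_pos hl (mul_pos two_pos hs))
  have hfactor (σ : ℝ) := setIntegral_congr_fun (μ := volume) measurableSet_Ioi
    fun l (hl : l ∈ Ioi (0 : ℝ)) => distortionIntegrand_eq k hs hl σ
  simp_rw [hfactor]
  rw [integral_integral_mul_dilation (g := fun x => ((1 + x ^ 2)⁻¹) ^ (k + 2)) (by fun_prop)
      (integrable_inv_one_add_sq_pow (k + 1)).integrableOn (by fun_prop) hscale
      (integrableOn_inverseGammaWeight.const_mul _),
    integral_const_mul, integral_inverseGammaWeight, mul_one, integral_Ioi_inv_one_add_sq_pow]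
  rfl

end Factorization

/-- **Lemma (evaluation of the triple integral in the distortion coefficient).**
`∫₀ᵗ∫₀^∞∫₀^∞ λ^{−3/2} e^{−1/(4λ)} s^{−3} (s²/(2s+σ²λ))^{k+2} dλ dσ ds
  = 2π ((2k−1)!!/(2k+2)!!) (t/2)^{k+1/2}`, with `(−1)!! = 1`. -/
theorem distortion_triple_integral (k : ℕ) (t : ℝ) (ht : 0 < t) :
    IntegrableOn
      (fun p : ℝ × ℝ × ℝ =>
        p.2.2 ^ (-(3:ℝ)/2) * Real.exp (-(1/(4 * p.2.2))) * (p.1 ^ 3)⁻¹ *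
          (p.1 ^ 2 / (2 * p.1 + p.2.1 ^ 2 * p.2.2)) ^ (k + 2))
      (Set.Ioc 0 t ×ˢ Set.Ioi 0 ×ˢ Set.Ioi 0) volume ∧
    (∫ s in Set.Ioc (0:ℝ) t, ∫ σ in Set.Ioi (0:ℝ), ∫ l in Set.Ioi (0:ℝ),
        l ^ (-(3:ℝ)/2) * Real.exp (-(1/(4 * l))) * (s ^ 3)⁻¹ *
          (s ^ 2 / (2 * s + σ ^ 2 * l)) ^ (k + 2))
      = 2 * π * ((Nat.doubleFactorial (2 * k - 1) : ℝ) /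
          (Nat.doubleFactorial (2 * k + 2) : ℝ)) * (t / 2) ^ ((k : ℝ) + 1/2) := by
  refine ⟨integrableOn_distortionIntegrand k t, ?_⟩
  have hk : -1 < (k : ℝ) - 1 / 2 := by linarith [k.cast_nonneg (α := ℝ)]
  have hodd : ((2 * k + 1)‼ : ℝ) = (2 * k + 1) * (2 * k - 1)‼ := mod_cast
    Nat.doubleFactorial_add_one (2 * k)
  calc ∫ s in Ioc 0 t, ∫ σ in Ioi 0, ∫ l in Ioi 0, distortionIntegrand k s σ l
    _ = ∫ s in Ioc 0 t,
          (s / 2) ^ ((k : ℝ) - 1 / 2) * (π / 2 * ((2 * k + 1)‼ / (2 * k + 2)‼)) :=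
      setIntegral_congr_fun measurableSet_Ioc fun s hs =>
        integral_integral_distortionIntegrand k hs.1
    _ = 2 * ((t / 2) ^ ((k : ℝ) + 1 / 2) / (k + 1 / 2)) *
          (π / 2 * ((2 * k + 1)‼ / (2 * k + 2)‼)) := by
      rw [integral_mul_const, integral_Ioc_div_rpow hk ht.le two_ne_zero]
      ring_nf
    _ = 2 * π * ((2 * k - 1)‼ / (2 * k + 2)‼) * (t / 2) ^ ((k : ℝ) + 1 / 2) := by
      rw [hodd]
      field_simp
end
end

section
/- For every t > 0 and x ∈ ℝ², ∫₀ᵗ s^{−1} (∇G(t − s/2, x) − ∇G(t, x)) ds = Σ_{k=1}^∞ (t/2)^k ∇(−Δ)^kG(t, x)/(k·k!), the series converging absolutely. Consequently, for any a ∈ ℝ², ∫₀ᵗ ∫_{ℝ²} (a·∇G(t−s, x−y) − a·∇G(t, x)) G(s, y)² dy ds = (1/(8π)) Σ_{k=1}^∞ (t/2)^k a·∇(−Δ)^kG(t, x)/(k·k!). -/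
open MeasureTheory Real Filter Asymptotics ENNReal

noncomputable section

/-!
For fixed `x` and `a`, the derivative `τ ↦ ∂ₐG(τ, x)` extends holomorphically to `τ ≠ 0`, so its
Taylor series at `t` represents it at `t - s` for `|s| < t`, and by the heat equation `∂_τ G = ΔG`
the coefficients are `∂ₐ(-Δ)ᵏG(t, x) / k!`. To apply the heat equation `k` times, note that
`(-Δ)ᵏG(t, x)` is `t⁻ᵏ k! L_k(r) G(t, x)` with `r = |x|² / 4t` and `L_k` the Laguerre polynomial;
the space and time derivatives are then two recursions for `L_k`. Replacing `s` by `s / 2`,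
dividing by `s` and integrating termwise gives the first expansion. The second reduces to it since
`G(s, ·)² = (8πs)⁻¹ G(s/2, ·)` and `∂ₐG(t - s) * G(s/2) = ∂ₐG(t - s/2)`, where the convolution is
evaluated by completing the square and dropping the odd part of the integrand.
-/

open Polynomial in
/-- The operator `p ↦ p' - p`, which is differentiation of `p` conjugated by `e^{-r}`:
`(p(r) e^{-r})' = (p' - p)(r) e^{-r}`. It encodes derivatives of the heat kernel in the radial
variable. -/
def twistedDerivative (R : Type*) [CommRing R] : R[X] →ₗ[R] R[X] :=
  derivative - LinearMap.id

open Polynomial in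
/-- The Laguerre polynomials, scaled as `k! L_k` so that no denominators occur. They are the
polynomial factors of the iterated Laplacians of the planar heat kernel. The recursion chosen as
definition is the one coming from differentiation in time. -/
def scaledLaguerre (R : Type*) [CommRing R] : ℕ → R[X]
  | 0 => 1
  | k + 1 =>
    ((k + 1 : ℕ) : R[X]) * scaledLaguerre R k + X * twistedDerivative R (scaledLaguerre R k)

section Laguerre

open Polynomial

variable {R : Type*} [CommRing R]

lemma twistedDerivative_apply (p : R[X]) : twistedDerivative R p = derivative p - p := rfl

lemma twistedDerivative_X_mul (p : R[X]) :
    twistedDerivative R (X * p) = p + X * twistedDerivative R p := by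
  simp only [twistedDerivative_apply, derivative_mul, derivative_X]
  ring

lemma twistedDerivative_natCast_mul (n : ℕ) (p : R[X]) :
    twistedDerivative R (n * p) = n * twistedDerivative R p := by
  simpa only [nsmul_eq_mul] using map_nsmul (twistedDerivative R) n p

lemma twistedDerivative_scaledLaguerre_succ (k : ℕ) :
    twistedDerivative R (scaledLaguerre R (k + 1)) =
      ((k + 2 : ℕ) : R[X]) * twistedDerivative R (scaledLaguerre R k) +
        X * twistedDerivative R (twistedDerivative R (scaledLaguerre R k)) := by
  rw [scaledLaguerre, map_add, twistedDerivative_natCast_mul, twistedDerivative_X_mul]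
  push_cast
  ring

/- This is the heat equation: the definition of `scaledLaguerre` differentiates in time, the right
side applies the Laplacian. With `δ p = p' - p`, the induction rests on `[δ X δ, X δ] = δ X δ`. -/
lemma scaledLaguerre_succ_eq_neg_twistedDerivative (k : ℕ) :
    scaledLaguerre R (k + 1) =
      -twistedDerivative R (X * twistedDerivative R (scaledLaguerre R k)) := by
  induction k with
  | zero => simp [scaledLaguerre, twistedDerivative_apply, sub_eq_neg_add]
  | succ k ih =>
    have laplacian_time_term :
        twistedDerivative R (X * twistedDerivative R
          (X * twistedDerivative R (scaledLaguerre R k))) =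
          -(scaledLaguerre R (k + 1) + X * twistedDerivative R (scaledLaguerre R (k + 1))) := by
      rw [← neg_eq_iff_eq_neg.mpr ih, mul_neg, map_neg, twistedDerivative_X_mul]
    calc scaledLaguerre R (k + 2)
        = ((k + 2 : ℕ) : R[X]) * scaledLaguerre R (k + 1) +
            X * twistedDerivative R (scaledLaguerre R (k + 1)) := by
          rw [scaledLaguerre]
      _ = -(((k + 1 : ℕ) : R[X]) *
              twistedDerivative R (X * twistedDerivative R (scaledLaguerre R k)) +
            twistedDerivative R (X * twistedDerivative R
              (X * twistedDerivative R (scaledLaguerre R k)))) := by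
          rw [laplacian_time_term]
          push_cast
          linear_combination (k + 1 : R[X]) * ih
      _ = -twistedDerivative R (X * twistedDerivative R (scaledLaguerre R (k + 1))) := by
          rw [scaledLaguerre, map_add (twistedDerivative R),
            twistedDerivative_natCast_mul, mul_add, map_add, mul_left_comm,
            twistedDerivative_natCast_mul]

end Laguerre

/-- The function `r ↦ p(r) e^{-r}`, the radial profile of the derivatives of the heat kernel when
`r = ‖x‖² / (4t)`. -/
def polyMulExpNeg (p : Polynomial ℝ) (r : ℝ) : ℝ := p.eval r * Real.exp (-r)

lemma hasDerivAt_polyMulExpNeg (p : Polynomial ℝ) (r : ℝ) :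
    HasDerivAt (polyMulExpNeg p) (polyMulExpNeg (twistedDerivative ℝ p) r) r := by
  refine ((p.hasDerivAt r).mul (hasDerivAt_neg r).exp).congr_deriv ?_
  rw [polyMulExpNeg, twistedDerivative_apply, Polynomial.eval_sub]
  ring

lemma hasDerivAt_inv_pow_mul_polyMulExpNeg_div (m : ℕ) (p : Polynomial ℝ) (ρ : ℝ) {t : ℝ}
    (ht : t ≠ 0) :
    HasDerivAt (fun τ => (τ ^ m)⁻¹ * polyMulExpNeg p (ρ / τ))
      (-((t ^ (m + 1))⁻¹ * polyMulExpNeg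
        ((m : Polynomial ℝ) * p + Polynomial.X * twistedDerivative ℝ p) (ρ / t))) t := by
  have hpow : HasDerivAt (fun τ : ℝ => (τ ^ m)⁻¹) (-(m * (t ^ (m + 1))⁻¹)) t := by
    refine ((hasDerivAt_pow m t).fun_inv (pow_ne_zero m ht)).congr_deriv ?_
    cases m with
    | zero => simp
    | succ m =>
      rw [Nat.add_sub_cancel]
      field_simp
      ring
  have hexp : HasDerivAt (fun τ => polyMulExpNeg p (ρ / τ))
      (polyMulExpNeg (twistedDerivative ℝ p) (ρ / t) * (ρ * -(t ^ 2)⁻¹)) t := by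
    simp only [div_eq_mul_inv]
    exact (hasDerivAt_polyMulExpNeg p _).comp t ((hasDerivAt_inv ht).const_mul ρ)
  refine (hpow.mul hexp).congr_deriv ?_
  simp only [polyMulExpNeg, Polynomial.eval_add, Polynomial.eval_mul, Polynomial.eval_natCast,
    Polynomial.eval_X]
  field_simp
  ring

lemma hasFDerivAt_comp_norm_sq_div {E : Type*} [NormedAddCommGroup E]
    [InnerProductSpace ℝ E] {φ : ℝ → ℝ} {φ' t : ℝ} {x : E}
    (h : HasDerivAt φ φ' (‖x‖ ^ 2 / (4 * t))) :
    HasFDerivAt (fun y : E => φ (‖y‖ ^ 2 / (4 * t))) ((φ' / (2 * t)) • innerSL ℝ x) x := by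
  have hsq := (hasStrictFDerivAt_norm_sq x).hasFDerivAt.mul_const (4 * t)⁻¹
  simp only [← div_eq_mul_inv] at hsq
  refine (h.comp_hasFDerivAt x hsq).congr_fderiv ?_
  ext v
  simp only [mul_inv_rev, smul_apply, coe_innerSL_apply, nsmul_eq_mul, Nat.cast_ofNat, smul_eq_mul]
  ring

lemma sum_mul_pd (f : E2 → ℝ) (x a : E2) : ∑ j : Fin 2, a j * pd j f x = fderiv ℝ f x a := by
  conv_rhs => rw [← (EuclideanSpace.basisFun (Fin 2) ℝ).sum_repr a]
  simp [pd]

lemma negLap_comp_norm_sq_div {φ φ' : ℝ → ℝ} {φ'' t : ℝ} {x : E2}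
    (hφ : ∀ r, HasDerivAt φ (φ' r) r) (hφ' : HasDerivAt φ' φ'' (‖x‖ ^ 2 / (4 * t))) :
    negLap (fun y => φ (‖y‖ ^ 2 / (4 * t))) x =
      -t⁻¹ * (φ' (‖x‖ ^ 2 / (4 * t)) + ‖x‖ ^ 2 / (4 * t) * φ'') := by
  have pd_eq (j : Fin 2) : pd j (fun y => φ (‖y‖ ^ 2 / (4 * t))) =
      fun y => φ' (‖y‖ ^ 2 / (4 * t)) / (2 * t) * y j := by
    ext y
    rw [pd, (hasFDerivAt_comp_norm_sq_div (hφ _)).fderiv]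
    simp [EuclideanSpace.inner_single_right]
  have pd_pd_eq (j : Fin 2) : pd j (pd j (fun y => φ (‖y‖ ^ 2 / (4 * t)))) x =
      φ' (‖x‖ ^ 2 / (4 * t)) / (2 * t) + φ'' * (x j / (2 * t)) ^ 2 := by
    have hcoord : HasFDerivAt (fun y : E2 => y j) (EuclideanSpace.proj j : E2 →L[ℝ] ℝ) x :=
      (EuclideanSpace.proj j : E2 →L[ℝ] ℝ).hasFDerivAt
    have hprod :=
      (hasFDerivAt_comp_norm_sq_div (hφ'.div_const (2 * t))).mul hcoord
    rw [pd_eq, pd]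
    refine (congrArg (· (EuclideanSpace.single j 1)) hprod.fderiv).trans ?_
    simp only [add_apply, smul_apply, PiLp.proj_apply, PiLp.single_eq_same, smul_eq_mul, mul_one,
      coe_innerSL_apply, EuclideanSpace.inner_single_right, conj_trivial, one_mul]
    ring
  have norm_sq : ‖x‖ ^ 2 = x 0 ^ 2 + x 1 ^ 2 := by simp [EuclideanSpace.norm_sq_eq]
  rw [negLap, pd_pd_eq, pd_pd_eq, norm_sq]
  ring

lemma iterate_negLap_G (t : ℝ) (k : ℕ) :
    negLap^[k] (G t) = fun y => (4 * π * t ^ (k + 1))⁻¹ *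
      polyMulExpNeg (scaledLaguerre ℝ k) (‖y‖ ^ 2 / (4 * t)) := by
  induction k with
  | zero => ext y; simp [G, polyMulExpNeg, scaledLaguerre, neg_div]
  | succ k ih =>
    ext y
    rw [Function.iterate_succ_apply', ih,
      negLap_comp_norm_sq_div (fun r => (hasDerivAt_polyMulExpNeg _ r).const_mul _)
        ((hasDerivAt_polyMulExpNeg _ _).const_mul _),
      scaledLaguerre_succ_eq_neg_twistedDerivative, twistedDerivative_X_mul]
    simp only [polyMulExpNeg, Polynomial.eval_neg, Polynomial.eval_add, Polynomial.eval_mul,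
      Polynomial.eval_X, mul_inv]
    ring

lemma fderiv_iterate_negLap_G (t : ℝ) (k : ℕ) (x a : E2) :
    fderiv ℝ (negLap^[k] (G t)) x a = inner ℝ x a / (8 * π) * ((t ^ (k + 2))⁻¹ *
      polyMulExpNeg (twistedDerivative ℝ (scaledLaguerre ℝ k)) (‖x‖ ^ 2 / 4 / t)) := by
  rw [iterate_negLap_G, (hasFDerivAt_comp_norm_sq_div
    ((hasDerivAt_polyMulExpNeg _ _).const_mul _)).fderiv, div_div]
  simp only [mul_inv_rev, smul_apply, coe_innerSL_apply, smul_eq_mul]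
  ring

lemma fderiv_G (t : ℝ) (x a : E2) :
    fderiv ℝ (G t) x a = -(inner ℝ x a / (2 * t)) * G t x := by
  have h := fderiv_iterate_negLap_G t 0 x a
  rw [Function.iterate_zero_apply] at h
  simp only [h, G, polyMulExpNeg, scaledLaguerre, twistedDerivative_apply,
    Polynomial.derivative_one, zero_sub, Polynomial.eval_neg, Polynomial.eval_one, neg_div, div_div]
  ring

lemma hasDerivAt_fderiv_iterate_negLap_G {t : ℝ} (ht : t ≠ 0) (k : ℕ) (x a : E2) :
    HasDerivAt (fun τ => fderiv ℝ (negLap^[k] (G τ)) x a)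
      (-fderiv ℝ (negLap^[k + 1] (G t)) x a) t := by
  simp only [fderiv_iterate_negLap_G, twistedDerivative_scaledLaguerre_succ]
  refine ((hasDerivAt_inv_pow_mul_polyMulExpNeg_div (k + 2) _ _ ht).const_mul _).congr_deriv ?_
  push_cast
  ring

lemma iteratedDeriv_fderiv_G {t : ℝ} (ht : t ≠ 0) (k : ℕ) (x a : E2) :
    iteratedDeriv k (fun τ => fderiv ℝ (G τ) x a) t =
      (-1) ^ k * fderiv ℝ (negLap^[k] (G t)) x a := by
  induction k generalizing t with
  | zero => simp
  | succ k ih =>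
    have near_t : iteratedDeriv k (fun τ => fderiv ℝ (G τ) x a) =ᶠ[nhds t]
        fun τ => (-1) ^ k * fderiv ℝ (negLap^[k] (G τ)) x a := by
      filter_upwards [isOpen_ne.mem_nhds ht] with τ hτ using ih hτ
    rw [iteratedDeriv_succ, near_t.deriv_eq,
      ((hasDerivAt_fderiv_iterate_negLap_G ht k x a).const_mul _).deriv]
    ring

lemma hasSum_taylorSeries_of_holomorphic_extension {f : ℝ → ℝ} {F : ℂ → ℂ} {c r y : ℝ}
    (hF : DifferentiableOn ℂ F (Metric.ball c r)) (hFf : ∀ s ∈ Metric.ball c r, F s = f s)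
    (hy : |y| < r) :
    HasSum (fun k : ℕ => (k.factorial : ℝ)⁻¹ * (y ^ k * iteratedDeriv k f c)) (f (c + y)) := by
  obtain ⟨R, hyR, hRr⟩ := exists_between hy
  have hR : 0 < R := (abs_nonneg y).trans_lt hyR
  lift R to NNReal using hR.le
  have complex_series := ((hF.mono (Metric.closedBall_subset_ball hRr)).hasFPowerSeriesOnBall
    hR).restrictScalars (𝕜 := ℝ)
  have radius_eq : (R : ℝ≥0∞) / ‖Complex.ofRealCLM‖ₑ = R := by simp
  have real_series := (Complex.reCLM.comp_hasFPowerSeriesOnBall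
    (HasFPowerSeriesOnBall.compContinuousLinearMap (u := Complex.ofRealCLM) complex_series)).congr
      (g := f) (fun s hs => by
        rw [radius_eq, Metric.eball_coe] at hs
        simp [hFf s (Metric.ball_subset_ball hRr.le hs)])
  have hy_mem : y ∈ Metric.eball (0 : ℝ) (R / ‖Complex.ofRealCLM‖ₑ) := by
    rwa [radius_eq, Metric.eball_coe, mem_ball_zero_iff]
  refine (real_series.hasSum_iteratedFDeriv hy_mem).congr_fun fun k => ?_
  simp [iteratedFDeriv_apply_eq_iteratedDeriv_mul_prod]

lemma hasSum_fderiv_G_sub {t s : ℝ} (hs : |s| < |t|) (x a : E2) :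
    HasSum (fun k : ℕ => s ^ k / k.factorial * fderiv ℝ (negLap^[k] (G t)) x a)
      (fderiv ℝ (G (t - s)) x a) := by
  have ht : t ≠ 0 := abs_pos.mp ((abs_nonneg s).trans_lt hs)
  have holomorphic : DifferentiableOn ℂ
      (fun z : ℂ => -((inner ℝ x a : ℝ) / (2 * z)) *
        ((4 * π * z)⁻¹ * Complex.exp (-(‖x‖ : ℂ) ^ 2 / (4 * z)))) (Metric.ball t |t|) := by
    intro z hz
    have hz0 : z ≠ 0 := by
      rintro rfl
      simp at hz
    fun_prop (disch := simp [hz0])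
  have taylor := hasSum_taylorSeries_of_holomorphic_extension
    (f := fun τ => fderiv ℝ (G τ) x a) (y := -s) holomorphic
    (fun τ _ => by simp [fderiv_G, G]) (by rwa [abs_neg])
  rw [← sub_eq_add_neg] at taylor
  refine taylor.congr_fun fun k => ?_
  have neg_pow_mul : (-s) ^ k * (-1) ^ k = s ^ k := by simp [← mul_pow]
  rw [iteratedDeriv_fderiv_G ht, ← neg_pow_mul]
  ring

lemma hasSum_integral_inv_smul_sub {E : Type*} [NormedAddCommGroup E] [NormedSpace ℝ E]
    [FiniteDimensional ℝ E] {t : ℝ} (ht : 0 < t) {c : ℕ → E} {f : ℝ → E}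
    (hf : ∀ s ∈ Set.Ioc 0 t, HasSum (fun k => s ^ k • c k) (f s)) :
    HasSum (fun k : ℕ => (t ^ (k + 1) / (k + 1)) • c (k + 1))
      (∫ s in 0..t, s⁻¹ • (f s - c 0)) := by
  have quotient_series {s : ℝ} (hs : s ∈ Set.Ioc 0 t) :
      HasSum (fun k => s ^ k • c (k + 1)) (s⁻¹ • (f s - c 0)) := by
    have tail := ((hasSum_nat_add_iff' 1).mpr (hf s hs)).const_smul s⁻¹
    simpa [pow_succ', smul_smul, hs.1.ne'] using tail
  have bound_summable : Summable fun k => ‖t ^ k • c (k + 1)‖ :=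
    (quotient_series (Set.right_mem_Ioc.mpr ht)).summable.norm
  have := intervalIntegral.hasSum_integral_of_dominated_convergence (μ := volume)
    (F := fun k s => s ^ k • c (k + 1)) (fun k _ => ‖t ^ k • c (k + 1)‖)
    (fun k => by fun_prop)
    (fun k => .of_forall fun s hs => by
      rw [Set.uIoc_of_le ht.le] at hs
      rw [norm_smul, norm_smul, norm_pow, norm_pow, Real.norm_of_nonneg hs.1.le,
        Real.norm_of_nonneg ht.le]
      gcongr
      exacts [hs.1.le, hs.2])
    (.of_forall fun _ _ => bound_summable) intervalIntegrable_const
    (.of_forall fun s hs => quotient_series (by rwa [Set.uIoc_of_le ht.le] at hs))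
  simpa [intervalIntegral.integral_smul_const] using this

lemma hasSum_integral_shifted_fderiv_G {t : ℝ} (ht : 0 < t) (x a : E2) :
    HasSum (fun k : ℕ => (t / 2) ^ (k + 1) * fderiv ℝ (negLap^[k + 1] (G t)) x a /
        (((k + 1) * Nat.factorial (k + 1) : ℕ) : ℝ))
      (∫ s in (0:ℝ)..t, s⁻¹ * (fderiv ℝ (G (t - s / 2)) x a - fderiv ℝ (G t) x a)) := by
  have taylor : ∀ s ∈ Set.Ioc 0 t, HasSum (fun k : ℕ =>
      s ^ k • ((2 ^ k)⁻¹ / k.factorial * fderiv ℝ (negLap^[k] (G t)) x a))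
      (fderiv ℝ (G (t - s / 2)) x a) := fun s hs => by
    refine (hasSum_fderiv_G_sub (s := s / 2) ?_ x a).congr_fun fun k => ?_
    · rw [abs_of_pos ht, abs_of_pos (half_pos hs.1)]
      linarith [hs.1, hs.2]
    · rw [div_pow, smul_eq_mul]
      ring
  have key := hasSum_integral_inv_smul_sub ht taylor
  simp only [pow_zero, Nat.factorial_zero, Nat.cast_one, inv_one, div_one, one_mul,
    Function.iterate_zero_apply, smul_eq_mul] at key
  refine key.congr_fun fun k => ?_
  rw [div_pow, Nat.cast_mul, Nat.cast_add_one]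
  field_simp

/- The shift by `(σ / (τ + σ)) • x` completes the square in the exponent. -/
lemma G_mul_G_eq_G_add_mul_G {τ σ : ℝ} (hτ : τ ≠ 0) (hσ : σ ≠ 0) (hτσ : τ + σ ≠ 0) (x v : E2) :
    G τ (x - (v + (σ / (τ + σ)) • x)) * G σ (v + (σ / (τ + σ)) • x) =
      G (τ + σ) x * G (τ * σ / (τ + σ)) v := by
  simp only [G]
  rw [mul_mul_mul_comm, ← Real.exp_add, mul_mul_mul_comm, ← Real.exp_add]
  congr 1
  · field_simp
  · congr 1
    simp only [EuclideanSpace.norm_sq_eq, Fin.sum_univ_two, PiLp.sub_apply, PiLp.add_apply,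
      PiLp.smul_apply, smul_eq_mul, Real.norm_eq_abs, sq_abs]
    field_simp
    ring

lemma G_sq (s : ℝ) (y : E2) : G s y ^ 2 = (8 * π * s)⁻¹ * G (s / 2) y := by
  rw [G, mul_pow, ← Real.exp_nat_mul, G, ← mul_assoc]
  congr 2
  · ring
  · push_cast
    ring

lemma integrable_norm_pow_mul_exp_neg_mul_sq {E : Type*} [NormedAddCommGroup E] [NormedSpace ℝ E]
    [FiniteDimensional ℝ E] [Nontrivial E] [MeasurableSpace E] [BorelSpace E] (μ : Measure E)
    [μ.IsAddHaarMeasure] {b : ℝ} (hb : 0 < b) (n : ℕ) :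
    Integrable (fun v => ‖v‖ ^ n * Real.exp (-b * ‖v‖ ^ 2)) μ := by
  rw [integrable_fun_norm_addHaar μ (f := fun r => r ^ n * Real.exp (-b * r ^ 2))]
  refine (integrableOn_rpow_mul_exp_neg_mul_sq hb
    (s := (Module.finrank ℝ E - 1 + n : ℕ)) ?_).congr_fun ?_ measurableSet_Ioi
  · exact neg_one_lt_zero.trans_le (Nat.cast_nonneg _)
  · intro r _
    simp only [smul_eq_mul, Real.rpow_natCast, pow_add, mul_assoc]

lemma G_eq_mul_exp_neg_mul_sq (t : ℝ) (x : E2) :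
    G t x = (4 * π * t)⁻¹ * Real.exp (-(4 * t)⁻¹ * ‖x‖ ^ 2) := by
  rw [G, neg_div, neg_mul, div_eq_inv_mul]

lemma integral_G {t : ℝ} (ht : 0 < t) : ∫ x : E2, G t x = 1 := by
  simp only [G_eq_mul_exp_neg_mul_sq]
  rw [integral_const_mul, GaussianFourier.integral_rexp_neg_mul_sq_norm (by positivity)]
  simp only [finrank_euclideanSpace, Fintype.card_fin, Nat.cast_ofNat,
    div_self (two_ne_zero' ℝ), Real.rpow_one]
  field_simp

lemma integrable_G {t : ℝ} (ht : 0 < t) : Integrable (G t) :=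
  Integrable.of_integral_ne_zero (by simp [integral_G ht])

lemma integrable_inner_mul_G {t : ℝ} (ht : 0 < t) (a : E2) :
    Integrable (fun v : E2 => inner ℝ v a * G t v) := by
  have dominant := ((integrable_norm_pow_mul_exp_neg_mul_sq (volume : Measure E2)
    (b := (4 * t)⁻¹) (by positivity) 1).const_mul ((4 * π * t)⁻¹ * ‖a‖))
  refine dominant.mono' (by unfold G; fun_prop) (.of_forall fun v => ?_)
  rw [norm_mul, G_eq_mul_exp_neg_mul_sq,
    Real.norm_of_nonneg (r := (4 * π * t)⁻¹ * _) (by positivity)]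
  calc ‖inner ℝ v a‖ * ((4 * π * t)⁻¹ * Real.exp (-(4 * t)⁻¹ * ‖v‖ ^ 2))
      ≤ ‖v‖ * ‖a‖ * ((4 * π * t)⁻¹ * Real.exp (-(4 * t)⁻¹ * ‖v‖ ^ 2)) := by
        gcongr; exact norm_inner_le_norm v a
    _ = _ := by ring

lemma integral_inner_mul_G (t : ℝ) (a : E2) : ∫ v : E2, inner ℝ v a * G t v = 0 := by
  have reflect := integral_neg_eq_self (fun v : E2 => inner ℝ v a * G t v) volume
  simp only [inner_neg_left, G, norm_neg, neg_mul, integral_neg] at reflect ⊢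
  linarith

lemma fderiv_G_mul_G_eq_add {τ σ : ℝ} (hτ : τ ≠ 0) (hσ : σ ≠ 0) (hτσ : τ + σ ≠ 0) (x a v : E2) :
    fderiv ℝ (G τ) (x - (v + (σ / (τ + σ)) • x)) a * G σ (v + (σ / (τ + σ)) • x) =
      fderiv ℝ (G (τ + σ)) x a * G (τ * σ / (τ + σ)) v +
        G (τ + σ) x / (2 * τ) * (inner ℝ v a * G (τ * σ / (τ + σ)) v) := by
  rw [fderiv_G, fderiv_G, mul_assoc, G_mul_G_eq_G_add_mul_G hτ hσ hτσ, inner_sub_left,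
    inner_add_left, real_inner_smul_left]
  field_simp
  ring

lemma integrable_fderiv_G_mul_G {τ σ : ℝ} (hτ : 0 < τ) (hσ : 0 < σ) (x a : E2) :
    Integrable (fun y => fderiv ℝ (G τ) (x - y) a * G σ y) := by
  have hρ : 0 < τ * σ / (τ + σ) := by positivity
  have shifted : Integrable fun v => fderiv ℝ (G τ) (x - (v + (σ / (τ + σ)) • x)) a *
      G σ (v + (σ / (τ + σ)) • x) := by
    simp only [fderiv_G_mul_G_eq_add hτ.ne' hσ.ne' (add_pos hτ hσ).ne']
    exact ((integrable_G hρ).const_mul _).add ((integrable_inner_mul_G hρ a).const_mul _)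
  simpa using shifted.comp_add_right (-((σ / (τ + σ)) • x))

lemma integral_fderiv_G_mul_G {τ σ : ℝ} (hτ : 0 < τ) (hσ : 0 < σ) (x a : E2) :
    ∫ y, fderiv ℝ (G τ) (x - y) a * G σ y = fderiv ℝ (G (τ + σ)) x a := by
  have hρ : 0 < τ * σ / (τ + σ) := by positivity
  rw [← integral_add_right_eq_self _ ((σ / (τ + σ)) • x)]
  simp only [fderiv_G_mul_G_eq_add hτ.ne' hσ.ne' (add_pos hτ hσ).ne']
  rw [integral_add ((integrable_G hρ).const_mul _) ((integrable_inner_mul_G hρ a).const_mul _),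
    integral_const_mul, integral_const_mul, integral_G hρ, integral_inner_mul_G, mul_one,
    mul_zero, add_zero]

lemma integral_fderiv_G_sub_mul_G_sq {s t : ℝ} (hs : 0 < s) (hst : s < t) (x a : E2) :
    ∫ y, (fderiv ℝ (G (t - s)) (x - y) a - fderiv ℝ (G t) x a) * G s y ^ 2 =
      (8 * π)⁻¹ * (s⁻¹ * (fderiv ℝ (G (t - s / 2)) x a - fderiv ℝ (G t) x a)) := by
  have hts := sub_pos.mpr hst
  have hs2 := half_pos hs
  calc ∫ y, (fderiv ℝ (G (t - s)) (x - y) a - fderiv ℝ (G t) x a) * G s y ^ 2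
      = ∫ y, (8 * π * s)⁻¹ * (fderiv ℝ (G (t - s)) (x - y) a * G (s / 2) y -
          fderiv ℝ (G t) x a * G (s / 2) y) := by
        congr with y
        rw [G_sq]
        ring
    _ = (8 * π * s)⁻¹ * (fderiv ℝ (G (t - s + s / 2)) x a - fderiv ℝ (G t) x a) := by
        rw [integral_const_mul, integral_sub (integrable_fderiv_G_mul_G hts hs2 x a)
          ((integrable_G hs2).const_mul _), integral_fderiv_G_mul_G hts hs2,
          integral_const_mul, integral_G hs2, mul_one]
    _ = _ := by
        rw [show t - s + s / 2 = t - s / 2 by ring, mul_inv, mul_assoc]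

/-- **Lemma (Taylor expansion of the shifted heat-kernel gradient).**
`∫₀ᵗ s⁻¹(∇G(t−s/2, x) − ∇G(t, x)) ds = Σ_{k≥1} (t/2)^k ∇(−Δ)^kG(t,x)/(k·k!)`
(the series converging absolutely), and consequently
`∫₀ᵗ∫ (a·∇G(t−s, x−y) − a·∇G(t,x)) G(s,y)² dy ds
  = (1/(8π)) Σ_{k≥1} (t/2)^k a·∇(−Δ)^kG(t,x)/(k·k!)`. -/
theorem shifted_gradient_expansion (t : ℝ) (ht : 0 < t) (x : E2) :
    (∀ j : Fin 2,
      Summable (fun k : ℕ =>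
        |(t / 2) ^ (k + 1) * pd j (negLap^[k + 1] (G t)) x /
          (((k + 1) * Nat.factorial (k + 1) : ℕ) : ℝ)|) ∧
      ∫ s in (0:ℝ)..t, s⁻¹ * (pd j (G (t - s / 2)) x - pd j (G t) x)
        = ∑' k : ℕ, (t / 2) ^ (k + 1) * pd j (negLap^[k + 1] (G t)) x /
            (((k + 1) * Nat.factorial (k + 1) : ℕ) : ℝ)) ∧
    (∀ a : E2,
      ∫ s in (0:ℝ)..t, ∫ y : E2,
          ((∑ j : Fin 2, a j * pd j (G (t - s)) (x - y))
            - ∑ j : Fin 2, a j * pd j (G t) x) * (G s y) ^ 2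
        = (8 * π)⁻¹ * ∑' k : ℕ, (t / 2) ^ (k + 1) *
            (∑ j : Fin 2, a j * pd j (negLap^[k + 1] (G t)) x) /
              (((k + 1) * Nat.factorial (k + 1) : ℕ) : ℝ)) := by
  have expansion := hasSum_integral_shifted_fderiv_G ht x
  refine ⟨fun j => ⟨(expansion (EuclideanSpace.single j 1)).summable.abs,
    (expansion (EuclideanSpace.single j 1)).tsum_eq.symm⟩, fun a => ?_⟩
  simp only [sum_mul_pd]
  rw [(expansion a).tsum_eq, ← intervalIntegral.integral_const_mul]
  refine intervalIntegral.integral_congr_uIoo fun s hs => ?_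
  rw [Set.uIoo_of_le ht.le] at hs
  exact integral_fderiv_G_sub_mul_G_sq hs.1 hs.2 x a
end
end
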